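/- Let V: ℝ → ℝ be a polynomial of degree d ≥ 3 with V(0) = V'(0) = 0 and V''(0) = 1. For ν = 1, …, d−2 let B_ν := −V^{(ν+2)}(0) Σ_{j=0}^{⌊(ν−1)/2⌋+1} (i/2)^{2j} (1/((2j+1)! (ν+1−2j)!)) ξ^{ν+1−2j} ∂_η^{2j+1}, let L_h := η ∂_ξ − ξ ∂_η, and let L̃^ε := L_h + Σ_{ν=1}^{d−2} ε^{ν/2} B_ν. Let f̃_0 ∈ 𝒮(ℝ²) be independent of ε, and for ε ∈ (0,1] let W̃^ε(ξ,η,t) be a solution of ∂_t W̃^ε + L̃^ε W̃^ε = 0 with W̃^ε(·,·,0) = f̃_0 that is C¹ in t with W̃^ε(·,·,t) ∈ 𝒮(ℝ²) for each t ≥ 0. Define Z^{(0)}(·,·,t) := f̃_0 ∘ g_h^{−t} and, recursively for l ≥ 1, Z^{(l)}(z,t) := −∫_0^t Σ_{ν=1}^{min(l, d−2)} (B_ν Z^{(l−ν)})(g_h^{−(t−s)}(z), s) ds, where g_h^t is the harmonic flow. Then for every N ∈ ℕ there is a constant C_N, independent of ε and t, such that the remainder R^{N+1}(·,·,t) :=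 W̃^ε(·,·,t) − Σ_{l=0}^{N} ε^{l/2} Z^{(l)}(·,·,t) satisfies ‖R^{N+1}(·,·,t)‖_{L²(ℝ²)} ≤ C_N e^{t} ε^{(N+1)/2} for all t ≥ 0 and ε ∈ (0,1]. -/

import Mathlib

open MeasureTheory

/-- The harmonic-oscillator Hamiltonian flow. -/
noncomputable def gh (t : ℝ) : ℝ × ℝ → ℝ × ℝ := fun z =>
  (z.1 * Real.cos t + z.2 * Real.sin t, z.2 * Real.cos t - z.1 * Real.sin t)

/-- The correction operator
`B_ν = -V^{(ν+2)}(0) Σ_{j=0}^{⌊(ν-1)/2⌋+1} (i/2)^{2j} (1/((2j+1)!(ν+1-2j)!)) ξ^{ν+1-2j} ∂_η^{2j+1}`. -/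
noncomputable def Bop (V : ℝ → ℝ) (ν : ℕ) (f : ℝ × ℝ → ℂ) : ℝ × ℝ → ℂ := fun p =>
  -((iteratedDeriv (ν + 2) V 0 : ℝ) : ℂ) *
    ∑ j ∈ Finset.range ((ν - 1) / 2 + 2),
      (Complex.I / 2) ^ (2 * j) *
        ((1 : ℂ) / ((((2 * j + 1).factorial * (ν + 1 - 2 * j).factorial : ℕ) : ℝ) : ℂ)) *
        (p.1 : ℂ) ^ (ν + 1 - 2 * j) *
        iteratedDeriv (2 * j + 1) (fun η => f (p.1, η)) p.2

/-- The harmonic transport operator `L_h = η ∂_ξ - ξ ∂_η`. -/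
noncomputable def Lh (f : ℝ × ℝ → ℂ) : ℝ × ℝ → ℂ := fun p =>
  (p.2 : ℂ) * deriv (fun ξ => f (ξ, p.2)) p.1 - (p.1 : ℂ) * deriv (fun η => f (p.1, η)) p.2


section AbstractPart
open Set Filter Topology

theorem aux_normsq_deriv {H : Type*} [NormedAddCommGroup H] [InnerProductSpace ℂ H]
    {X : ℝ → H} {s : Set ℝ} {t M d : ℝ}
    (hL : ∀ r ∈ s, ‖X r - X t‖ ≤ M * |r - t|)
    (hd : HasDerivWithinAt (fun r => (inner ℂ (X r) (X t)).re) d s t) :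
    HasDerivWithinAt (fun r => ‖X r‖ ^ 2) (2 * d) s t := by
  have h1 : HasDerivWithinAt (fun r => ‖X r - X t‖ ^ 2) 0 s t := by
    rw [hasDerivWithinAt_iff_isLittleO]
    have : (fun r => (r - t) ^ 2) =o[𝓝[s] t] (fun r => r - t) := by
      have h2 : (fun r : ℝ => (r - t) * (r - t)) =o[𝓝[s] t] (fun r => 1 * (r - t)) := by
        refine Asymptotics.IsLittleO.mul_isBigO ?_ (Asymptotics.isBigO_refl _ _)
        rw [Asymptotics.isLittleO_one_iff]
        have : Tendsto (fun r : ℝ => r - t) (𝓝 t) (𝓝 (t - t)) :=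
          (continuous_id.sub continuous_const).tendsto t
        rw [sub_self] at this
        exact this.mono_left nhdsWithin_le_nhds
      simpa [sq] using h2
    refine Asymptotics.IsBigO.trans_isLittleO ?_ this
    refine Asymptotics.IsBigO.of_bound (M ^ 2) ?_
    filter_upwards [self_mem_nhdsWithin] with r hr
    have h3 := hL r hr
    simp only [sub_self, norm_zero, smul_zero, sub_zero]
    have h4 : ‖X r - X t‖ ^ 2 ≤ (M * |r - t|) ^ 2 := by gcongr
    simpa [mul_pow] using h4
  have h2 := (h1.add (hd.const_mul 2)).sub_const (‖X t‖ ^ 2)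
  rw [zero_add] at h2
  have P : ∀ r, ‖X r‖ ^ 2 = ((fun r => ‖X r - X t‖ ^ 2) +
      fun y => 2 * (inner ℂ (X y) (X t)).re) r - ‖X t‖ ^ 2 := by
    intro r
    have := norm_sub_sq (𝕜 := ℂ) (X r) (X t)
    simp only [RCLike.re_to_complex] at this
    simp only [Pi.add_apply]
    linarith
  exact h2.congr (fun r _ => P r) (P t)

theorem aux_energy {z z' : ℝ → ℝ} {a b c : ℝ} (hc0 : 0 ≤ c) (hab : a ≤ b)
    (hz : ∀ t ∈ Icc a b, 0 ≤ z t)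
    (hd : ∀ t ∈ Icc a b, HasDerivWithinAt z (z' t) (Icc a b) t)
    (hb : ∀ t ∈ Icc a b, |z' t| ≤ 2 * c * √(z t)) :
    |√(z b) - √(z a)| ≤ c * (b - a) := by
  have hc : ∀ δ > 0, |√(z b + δ) - √(z a + δ)| ≤ c * (b - a) := by
    intro δ hδ
    have := (convex_Icc a b).norm_image_sub_le_of_norm_hasDerivWithin_le
      (f := fun t => √(z t + δ)) (f' := fun t => z' t / (2 * √(z t + δ))) (C := c) (x := a) (y := b)
      (fun t ht => by
        have h1 := ((hd t ht).add_const δ).sqrt (by have := hz t ht; positivity)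
        simpa using h1)
      (fun t ht => by
        have h0 := hz t ht
        have hpos : 0 < √(z t + δ) := Real.sqrt_pos.2 (by positivity)
        rw [Real.norm_eq_abs, abs_div, abs_of_pos (by positivity : 0 < 2 * √(z t + δ)),
          div_le_iff₀ (by positivity)]
        have h1 := hb t ht
        have h2 : √(z t) ≤ √(z t + δ) := Real.sqrt_le_sqrt (by linarith)
        nlinarith)
      (left_mem_Icc.2 hab) (right_mem_Icc.2 hab)
    rwa [Real.norm_eq_abs, Real.norm_eq_abs, abs_of_nonneg (sub_nonneg.2 hab)] at this
  have ht : Tendsto (fun δ : ℝ => |√(z b + δ) - √(z a + δ)|) (𝓝[>] 0) (𝓝 |√(z b + 0) - √(z a + 0)|) := by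
    refine (Continuous.tendsto ?_ 0).mono_left nhdsWithin_le_nhds
    fun_prop
  rw [add_zero, add_zero] at ht
  refine le_of_tendsto ht ?_
  filter_upwards [self_mem_nhdsWithin] with δ hδ using hc δ hδ


theorem aux_lemmaC {H S : Type*} [NormedAddCommGroup H] [InnerProductSpace ℂ H]
    [AddCommGroup S] [Module ℂ S] (ι : S →ₗ[ℂ] H) (A : S →ₗ[ℂ] S) (φ : ℝ → S)
    (hskew : ∀ x, (inner ℂ (ι (A x)) (ι x)).re = 0)
    (H2 : ∀ a b t M : ℝ, 0 ≤ a → t ∈ Icc a b →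
      (∀ s ∈ Icc a b, ‖ι (φ s) - ι (φ t)‖ ≤ M * |s - t|) → ∀ x : S,
      HasDerivWithinAt (fun s => (inner ℂ (ι (φ s)) (ι x)).re)
        (inner ℂ (ι (A (φ t))) (ι x)).re (Icc a b) t)
    (H4 : ∀ a b M : ℝ, 0 ≤ a → a ≤ b → (∀ t ∈ Ioo a b, ‖ι (A (φ t))‖ ≤ M) →
      ‖ι (φ b) - ι (φ a)‖ ≤ M * (b - a))
    {a b M : ℝ} (ha : 0 ≤ a) (hab : a < b) (hM : ∀ t ∈ Ioo a b, ‖ι (A (φ t))‖ ≤ M)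
    {t0 t : ℝ} (ht0 : t0 ∈ Icc a b) (ht : t ∈ Icc a b) :
    ‖ι (A (φ t))‖ ≤ ‖ι (A (φ t0))‖ := by
  -- Lipschitz
  have lip : ∀ s ∈ Icc a b, ∀ r ∈ Icc a b, ‖ι (φ s) - ι (φ r)‖ ≤ M * |s - r| := by
    intro s hs r hr
    rcases le_total s r with h | h
    · rw [norm_sub_rev, abs_sub_comm, abs_of_nonneg (sub_nonneg.2 h)]
      exact H4 s r M (ha.trans hs.1) h
        fun x hx => hM x ⟨hs.1.trans_lt hx.1, hx.2.trans_le hr.2⟩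
    · rw [abs_of_nonneg (sub_nonneg.2 h)]
      exact H4 r s M (ha.trans hr.1) h
        fun x hx => hM x ⟨hr.1.trans_lt hx.1, hx.2.trans_le hs.2⟩
  -- step 1
  have st1 : ∀ x ∈ Icc a b, ∀ y ∈ Icc a b, x ≤ y → (t0 = x ∨ t0 = y) →
      ‖ι (φ y) - ι (φ x)‖ ≤ ‖ι (A (φ t0))‖ * (y - x) := by
    intro x hx y hy hxy hor
    have key := aux_energy (z := fun s => ‖ι (φ s) - ι (φ t0)‖ ^ 2)
      (z' := fun s => 2 * (inner ℂ (ι (A (φ s))) (ι (φ s - φ t0))).re)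
      (a := x) (b := y) (c := ‖ι (A (φ t0))‖) (norm_nonneg _) hxy
      (fun s _ => by positivity)
      (fun s hs => by
        have hs' : s ∈ Icc a b := ⟨hx.1.trans hs.1, hs.2.trans hy.2⟩
        refine aux_normsq_deriv (X := fun s => ι (φ s) - ι (φ t0)) (M := M) ?_ ?_
        · intro r hr
          have := lip r ⟨hx.1.trans hr.1, hr.2.trans hy.2⟩ s hs'
          simpa using this
        · have := H2 a b s M ha hs' (fun r hr => lip r hr s hs') (φ s - φ t0)
          have := (this.mono (Icc_subset_Icc hx.1 hy.2)).sub_const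
            ((inner ℂ (ι (φ t0)) (ι (φ s - φ t0))).re)
          have P : ∀ r, (inner ℂ (ι (φ r) - ι (φ t0)) (ι (φ s) - ι (φ t0))).re =
              (inner ℂ (ι (φ r)) (ι (φ s - φ t0))).re
                - (inner ℂ (ι (φ t0)) (ι (φ s - φ t0))).re := by
            intro r; rw [inner_sub_left, Complex.sub_re, map_sub]
          exact this.congr (fun r _ => P r) (P s))
      (fun s hs => by
        have h1 : (inner ℂ (ι (A (φ s))) (ι (φ s - φ t0))).re
            = (inner ℂ (ι (A (φ t0))) (ι (φ s - φ t0))).re := by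
          have := hskew (φ s - φ t0)
          rw [map_sub A, map_sub ι (A _), inner_sub_left, Complex.sub_re] at this
          linarith
        rw [h1, Real.sqrt_sq (norm_nonneg _), abs_mul, abs_two, mul_assoc, ← map_sub]
        gcongr
        exact (Complex.abs_re_le_norm _).trans (norm_inner_le_norm _ _))
    simp only [Real.sqrt_sq (norm_nonneg _)] at key
    rcases hor with h | h
    · subst h; simpa using key
    · subst h; rw [norm_sub_rev]; simpa using key
  -- step 2
  have st2 : ∀ τ, 0 ≤ τ → ∀ x y, a ≤ x → x ≤ y → y + τ ≤ b →
      ‖ι (φ (y + τ)) - ι (φ y)‖ = ‖ι (φ (x + τ)) - ι (φ x)‖ := by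
    intro τ hτ x y hx hxy hy
    have key := aux_energy (z := fun s => ‖ι (φ (s + τ)) - ι (φ s)‖ ^ 2)
      (z' := fun s => 2 * (inner ℂ (ι (A (φ (s + τ) - φ s))) (ι (φ (s + τ) - φ s))).re)
      (a := x) (b := y) (c := 0) le_rfl hxy
      (fun s _ => by positivity)
      (fun s hs => by
        have hs1 : s ∈ Icc a b := ⟨by linarith [hs.1], by linarith [hs.2]⟩
        have hs2 : s + τ ∈ Icc a b := ⟨by linarith [hs.1], by linarith [hs.2]⟩
        refine aux_normsq_deriv (X := fun s => ι (φ (s + τ)) - ι (φ s)) (M := 2 * M) ?_ ?_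
        · intro r hr
          have hr1 : r ∈ Icc a b := ⟨by linarith [hr.1], by linarith [hr.2]⟩
          have hr2 : r + τ ∈ Icc a b := ⟨by linarith [hr.1], by linarith [hr.2]⟩
          have e1 := lip r hr1 s hs1
          have e2 := lip _ hr2 _ hs2
          rw [add_sub_add_right_eq_sub] at e2
          calc _ = ‖(ι (φ (r + τ)) - ι (φ (s + τ))) - (ι (φ r) - ι (φ s))‖ := by
                congr 1; abel
            _ ≤ _ := (norm_sub_le _ _).trans (by linarith)
        · have e1 := (H2 a b s M ha hs1 (fun r hr => lip r hr s hs1)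
            (φ (s + τ) - φ s)).mono (s := Icc x y)
              (fun r (hr : r ∈ Icc x y) => ⟨by linarith [hr.1], by linarith [hr.2]⟩)
          have e2 := H2 a b (s + τ) M ha hs2 (fun r hr => lip r hr _ hs2) (φ (s + τ) - φ s)
          have e3 : HasDerivWithinAt (fun r : ℝ => r + τ) 1 (Icc x y) s :=
            (hasDerivAt_id s).add_const τ |>.hasDerivWithinAt
          have e4 := HasDerivWithinAt.comp (s' := Icc a b) s e2 e3
            (fun r (hr : r ∈ Icc x y) => ⟨by linarith [hr.1], by linarith [hr.2]⟩)
          have e5 := e4.sub e1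
          have P : ∀ r, (inner ℂ (ι (φ (r + τ)) - ι (φ r)) (ι (φ (s + τ)) - ι (φ s))).re =
              (inner ℂ (ι (φ (r + τ))) (ι (φ (s + τ) - φ s))).re
                - (inner ℂ (ι (φ r)) (ι (φ (s + τ) - φ s))).re := by
            intro r; rw [inner_sub_left, Complex.sub_re, map_sub]
          refine (e5.congr (fun r _ => P r) (P s)).congr_deriv ?_
          simp only [map_sub, inner_sub_left, Complex.sub_re, mul_one])
      (fun s hs => by
        rw [hskew]; simp)
    simp only [Real.sqrt_sq (norm_nonneg _), zero_mul] at key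
    have := abs_nonpos_iff.1 key
    linarith
  -- step 3
  have st3 : ∀ τ, 0 ≤ τ → τ ≤ (b - a) / 2 → ∀ x, a ≤ x → x + τ ≤ b →
      ‖ι (φ (x + τ)) - ι (φ x)‖ ≤ ‖ι (A (φ t0))‖ * τ := by
    intro τ hτ hτ2 x hx hxb
    have gen : ∀ y, a ≤ y → y + τ ≤ b →
        ‖ι (φ (x + τ)) - ι (φ x)‖ = ‖ι (φ (y + τ)) - ι (φ y)‖ := by
      intro y hy hyb
      rcases le_total x y with h | h
      · exact (st2 τ hτ x y hx h hyb).symm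
      · exact st2 τ hτ y x hy h hxb
    by_cases hcase : t0 + τ ≤ b
    · rw [gen t0 ht0.1 hcase]
      have := st1 t0 ht0 (t0 + τ) ⟨by linarith [ht0.1], hcase⟩ (by linarith) (Or.inl rfl)
      simpa using this
    · have h1 : a ≤ t0 - τ := by linarith
      rw [gen (t0 - τ) h1 (by linarith [ht0.2]), sub_add_cancel]
      have := st1 (t0 - τ) ⟨h1, by linarith [ht0.2]⟩ t0 ht0 (by linarith) (Or.inr rfl)
      simpa using this
  -- step 4
  have hd := H2 a b t M ha ht (fun r hr => lip r hr t ht) (A (φ t))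
  rw [hasDerivWithinAt_iff_tendsto_slope] at hd
  have hne : (𝓝[Icc a b \ {t}] t).NeBot := by
    have h1 := (uniqueDiffOn_Icc hab) t ht
    rw [uniqueDiffWithinAt_iff_accPt] at h1
    rw [accPt_principal_iff_nhdsWithin] at h1
    exact h1
  have hle : (inner ℂ (ι (A (φ t))) (ι (A (φ t)))).re
      ≤ ‖ι (A (φ t0))‖ * ‖ι (A (φ t))‖ := by
    refine le_of_tendsto hd ?_
    have hnear : ∀ᶠ s in 𝓝[Icc a b \ {t}] t, |s - t| < (b - a) / 2 := by
      refine mem_nhdsWithin_of_mem_nhds ?_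
      have := Metric.ball_mem_nhds t (by linarith : 0 < (b - a) / 2)
      simpa [Metric.ball, Real.dist_eq] using this
    filter_upwards [hnear, self_mem_nhdsWithin] with s hs1 hs2
    have hst : s - t ≠ 0 := sub_ne_zero.2 hs2.2
    have h1 : ‖ι (φ s) - ι (φ t)‖ ≤ ‖ι (A (φ t0))‖ * |s - t| := by
      rcases le_total s t with h | h
      · rw [norm_sub_rev, abs_sub_comm]
        rw [abs_sub_comm] at hs1
        rw [abs_of_nonneg (sub_nonneg.2 h)] at hs1 ⊢
        have := st3 (t - s) (by linarith) hs1.le s hs2.1.1 (by linarith [ht.2])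
        simpa using this
      · rw [abs_of_nonneg (sub_nonneg.2 h)] at hs1 ⊢
        have := st3 (s - t) (by linarith) hs1.le t ht.1 (by linarith [hs2.1.2])
        simpa using this
    rw [slope_def_field, ← Complex.sub_re, ← inner_sub_left]
    refine (le_abs_self _).trans ?_
    rw [abs_div, div_le_iff₀ (abs_pos.2 hst)]
    refine (Complex.abs_re_le_norm _).trans ((norm_inner_le_norm _ _).trans ?_)
    nlinarith [norm_nonneg (ι (A (φ t)))]
  have h2 : (inner ℂ (ι (A (φ t))) (ι (A (φ t)))).re = ‖ι (A (φ t))‖ ^ 2 := by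
    have := inner_self_eq_norm_sq (𝕜 := ℂ) (ι (A (φ t)))
    simpa using this
  rw [h2, sq] at hle
  by_contra hcon
  push Not at hcon
  have := norm_nonneg (ι (A (φ t0)))
  nlinarith

theorem aux_baire {H S : Type*} [NormedAddCommGroup H] [InnerProductSpace ℂ H]
    [AddCommGroup S] [Module ℂ S] (ι : S →ₗ[ℂ] H) (A : S →ₗ[ℂ] S) (φ : ℝ → S)
    (hskew : ∀ x, (inner ℂ (ι (A x)) (ι x)).re = 0)
    (H2 : ∀ a b t M : ℝ, 0 ≤ a → t ∈ Icc a b →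
      (∀ s ∈ Icc a b, ‖ι (φ s) - ι (φ t)‖ ≤ M * |s - t|) → ∀ x : S,
      HasDerivWithinAt (fun s => (inner ℂ (ι (φ s)) (ι x)).re)
        (inner ℂ (ι (A (φ t))) (ι x)).re (Icc a b) t)
    (H3 : ∀ n : ℕ, IsClosed {t : ℝ | 0 ≤ t ∧ ‖ι (φ t)‖ ≤ n ∧ ‖ι (A (φ t))‖ ≤ n})
    (H4 : ∀ a b M : ℝ, 0 ≤ a → a ≤ b → (∀ t ∈ Ioo a b, ‖ι (A (φ t))‖ ≤ M) →
      ‖ι (φ b) - ι (φ a)‖ ≤ M * (b - a)) :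
    ∀ t, 0 ≤ t → ‖ι (A (φ t))‖ ≤ ‖ι (A (φ 0))‖ := by
  let ℓ : ℝ → ℝ := fun t => ‖ι (A (φ t))‖
  have lemC : ∀ a b M : ℝ, 0 ≤ a → a < b → (∀ t ∈ Ioo a b, ℓ t ≤ M) →
      ∀ t0 ∈ Icc a b, ∀ t ∈ Icc a b, ℓ t ≤ ℓ t0 :=
    fun a b M ha hab hM t0 ht0 t ht => aux_lemmaC ι A φ hskew H2 H4 ha hab hM ht0 ht
  let O : Set ℝ := {t | ∃ M, ∀ᶠ s in 𝓝 t, 0 ≤ s → ℓ s ≤ M}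
  have hO : IsOpen O := by
    rw [isOpen_iff_mem_nhds]
    rintro t ⟨M, hM⟩
    filter_upwards [hM.eventually_nhds] with s hs using ⟨M, hs⟩
  have hcpt : ∀ a b, 0 ≤ a → Icc a b ⊆ O → ∃ M, ∀ t ∈ Icc a b, ℓ t ≤ M := by
    intro a b ha hab
    refine (isCompact_Icc (a := a) (b := b)).induction_on (p := fun s => ∃ M, ∀ t ∈ s, ℓ t ≤ M)
      ⟨0, by simp⟩ ?_ ?_ ?_
    · rintro s t hst ⟨M, hM⟩
      exact ⟨M, fun x hx => hM x (hst hx)⟩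
    · rintro s t ⟨M, hM⟩ ⟨M', hM'⟩
      refine ⟨max M M', ?_⟩
      rintro x (hx | hx)
      · exact (hM x hx).trans (le_max_left _ _)
      · exact (hM' x hx).trans (le_max_right _ _)
    · intro x hx
      obtain ⟨M, hM⟩ := hab hx
      refine ⟨{s | 0 ≤ s → ℓ s ≤ M} ∩ Icc a b, ?_, M, ?_⟩
      · rw [inter_comm]
        exact inter_mem self_mem_nhdsWithin (mem_nhdsWithin_of_mem_nhds hM)
      · rintro s ⟨hs, hs2⟩
        exact hs (ha.trans hs2.1)
  let K : Set ℝ := Ici 0 ∩ Oᶜ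
  have hK : IsClosed K := isClosed_Ici.inter hO.isClosed_compl
  have hKempty : K = ∅ := by
    by_contra hne
    have hne : K.Nonempty := nonempty_iff_ne_empty.2 hne
    have : Nonempty K := hne.to_subtype
    have : CompleteSpace K := hK.completeSpace_coe
    obtain ⟨n, hn⟩ := nonempty_interior_of_iUnion_of_closed
      (f := fun n : ℕ => {k : K | 0 ≤ (k : ℝ) ∧ ‖ι (φ k)‖ ≤ n ∧ ‖ι (A (φ k))‖ ≤ n})
      (fun n => (H3 n).preimage continuous_subtype_val) (by
        rw [eq_univ_iff_forall]
        intro k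
        obtain ⟨n, hn⟩ := exists_nat_ge (max ‖ι (φ k)‖ ‖ι (A (φ k))‖)
        exact mem_iUnion.2 ⟨n, k.2.1, (le_max_left _ _).trans hn, (le_max_right _ _).trans hn⟩)
    obtain ⟨k0, hk0⟩ := hn
    rw [mem_interior_iff_mem_nhds, Metric.mem_nhds_iff] at hk0
    obtain ⟨δ, hδ, hball⟩ := hk0
    have hKb : ∀ k ∈ K, |k - k0| < δ → ℓ k ≤ n := by
      intro k hk hkd
      exact (hball (show (⟨k, hk⟩ : K) ∈ Metric.ball k0 δ from hkd)).2.2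
    have hk0K := k0.2
    refine k0.2.2 ⟨n, ?_⟩
    filter_upwards [Metric.ball_mem_nhds (k0 : ℝ) hδ] with s hs hs0
    rw [Metric.mem_ball, Real.dist_eq] at hs
    by_cases hsK : s ∈ K
    · exact hKb s hsK hs
    rcases le_total s k0 with h | h
    · set T := K ∩ Icc s k0 with hT
      have hTc : IsCompact T := isCompact_Icc.inter_left hK
      have hTn : T.Nonempty := ⟨k0, hk0K, h, le_rfl⟩
      have hb := hTc.sInf_mem hTn
      set b := sInf T with hbdef
      have hsb : s < b := lt_of_le_of_ne hb.2.1 (fun h => hsK (h ▸ hb.1))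
      have hsub : ∀ c < b, Icc s c ⊆ O := by
        intro c hc r hr
        by_contra hrO
        have : r ∈ T := ⟨⟨hs0.trans hr.1, hrO⟩, hr.1, hr.2.trans (hc.le.trans hb.2.2)⟩
        have := csInf_le hTc.bddBelow this
        linarith [hr.2]
      have hbd : ∀ t ∈ Ioo s b, ℓ t ≤ ℓ s := by
        intro t ht
        obtain ⟨M, hM⟩ := hcpt s t hs0 (hsub t ht.2)
        exact lemC s t M hs0 ht.1 (fun r hr => hM r ⟨hr.1.le, hr.2.le⟩) s ⟨le_rfl, ht.1.le⟩
          t ⟨ht.1.le, le_rfl⟩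
      have h1 := lemC s b (ℓ s) hs0 hsb hbd b ⟨hsb.le, le_rfl⟩ s ⟨le_rfl, hsb.le⟩
      refine h1.trans (hKb b hb.1 ?_)
      rw [abs_sub_comm, abs_of_nonneg (by linarith [hb.2.2])]
      rw [abs_sub_comm, abs_of_nonneg (by linarith)] at hs
      linarith
    · set T := K ∩ Icc (k0 : ℝ) s with hT
      have hTc : IsCompact T := isCompact_Icc.inter_left hK
      have hTn : T.Nonempty := ⟨k0, hk0K, le_rfl, h⟩
      have hb := hTc.sSup_mem hTn
      set b := sSup T with hbdef
      have hb0 : 0 ≤ b := hb.1.1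
      have hsb : b < s := lt_of_le_of_ne hb.2.2 (fun h => hsK (h ▸ hb.1))
      have hsub : ∀ c > b, Icc c s ⊆ O := by
        intro c hc r hr
        by_contra hrO
        have : r ∈ T := ⟨⟨hb0.trans (hc.le.trans hr.1), hrO⟩, (hb.2.1.trans hc.le).trans hr.1, hr.2⟩
        have := le_csSup hTc.bddAbove this
        linarith [hr.1]
      have hbd : ∀ t ∈ Ioo b s, ℓ t ≤ ℓ s := by
        intro t ht
        have ht0 : 0 ≤ t := hb0.trans ht.1.le
        obtain ⟨M, hM⟩ := hcpt t s ht0 (hsub t ht.1)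
        exact lemC t s M ht0 ht.2 (fun r hr => hM r ⟨hr.1.le, hr.2.le⟩) s ⟨ht.2.le, le_rfl⟩
          t ⟨le_rfl, ht.2.le⟩
      have h1 := lemC b s (ℓ s) hb0 hsb hbd b ⟨le_rfl, hsb.le⟩ s ⟨hsb.le, le_rfl⟩
      refine h1.trans (hKb b hb.1 ?_)
      rw [abs_of_nonneg (by linarith [hb.2.1])]
      rw [abs_of_nonneg (by linarith)] at hs
      linarith
  have hall : Ici 0 ⊆ O := by
    intro t ht
    by_contra h
    have : t ∈ K := ⟨ht, h⟩
    rw [hKempty] at this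
    exact this
  intro t ht
  obtain ⟨M, hM⟩ := hcpt 0 (t + 1) le_rfl (fun r hr => hall hr.1)
  exact lemC 0 (t + 1) M le_rfl (by linarith) (fun r hr => hM r ⟨hr.1.le, hr.2.le⟩) 0
    ⟨le_rfl, by linarith⟩ t ⟨ht, by linarith⟩

end AbstractPart


section ConcretePart
open Set Filter Topology

noncomputable def toL2 : SchwartzMap (ℝ × ℝ) ℂ →ₗ[ℂ] Lp ℂ 2 (volume : Measure (ℝ × ℝ)) :=
  (SchwartzMap.toLpCLM ℂ ℂ 2 (volume : Measure (ℝ × ℝ))).toLinearMap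

theorem toL2_inner (f g : SchwartzMap (ℝ × ℝ) ℂ) :
    inner ℂ (toL2 f) (toL2 g) = ∫ p, inner ℂ (f p) (g p) :=
  SchwartzMap.inner_toL2_toL2_eq f g

theorem toL2_normsq (f : SchwartzMap (ℝ × ℝ) ℂ) : ∫ p, ‖f p‖ ^ 2 = ‖toL2 f‖ ^ 2 := by
  have h := inner_self_eq_norm_sq_to_K (𝕜 := ℂ) (toL2 f)
  rw [toL2_inner] at h
  have h2 : ∀ p, inner ℂ (f p) (f p) = ((‖f p‖ ^ 2 : ℝ) : ℂ) := fun p => by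
    rw [inner_self_eq_norm_sq_to_K]; simp
  simp_rw [h2] at h
  rw [integral_complex_ofReal] at h
  have h3 : ((∫ p, ‖f p‖ ^ 2 : ℝ) : ℂ) = ((‖toL2 f‖ ^ 2 : ℝ) : ℂ) := by
    rw [h]; simp
  exact_mod_cast h3

theorem schwartz_sq_integrable (f : SchwartzMap (ℝ × ℝ) ℂ) :
    Integrable (fun p => ‖f p‖ ^ 2) (volume : Measure (ℝ × ℝ)) :=
  (f.memLp 2 volume).integrable_norm_pow (by norm_num)

theorem schwartz_mul_integrable (f g : SchwartzMap (ℝ × ℝ) ℂ) :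
    Integrable (fun p => ‖f p‖ * ‖g p‖) (volume : Measure (ℝ × ℝ)) := by
  refine ((schwartz_sq_integrable f).add (schwartz_sq_integrable g)).mono' 
    (f.continuous.norm.mul g.continuous.norm).aestronglyMeasurable (ae_of_all _ fun p => ?_)
  simp only [Pi.add_apply]
  rw [Real.norm_of_nonneg (by positivity)]
  nlinarith [sq_nonneg (‖f p‖ - ‖g p‖), sq_nonneg (‖f p‖), sq_nonneg (‖g p‖)]

theorem schwartz_inner_integrable (f g : SchwartzMap (ℝ × ℝ) ℂ) :
    Integrable (fun p => inner ℂ (f p) (g p)) (volume : Measure (ℝ × ℝ)) := by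
  refine (schwartz_mul_integrable f g).mono' 
    (f.continuous.inner g.continuous).aestronglyMeasurable (ae_of_all _ fun p => ?_)
  exact norm_inner_le_norm _ _

theorem weak_zero {α : Type*} {l : Filter α} [l.IsCountablyGenerated]
    (D : α → SchwartzMap (ℝ × ℝ) ℂ) (M : ℝ)
    (hM : ∀ᶠ n in l, ‖toL2 (D n)‖ ≤ M)
    (hp : ∀ p, Tendsto (fun n => D n p) l (𝓝 0)) (x : SchwartzMap (ℝ × ℝ) ℂ) :
    Tendsto (fun n => inner ℂ (toL2 (D n)) (toL2 x)) l (𝓝 0) := by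
  rw [Metric.tendsto_nhds]
  intro ε hε
  set κ : ℝ := ε / (2 * (M ^ 2 + 1)) with hκ
  have hκ0 : 0 < κ := by positivity
  have hκM : κ * M ^ 2 < ε / 2 := by
    rw [hκ, div_mul_eq_mul_div, div_lt_div_iff₀ (by positivity) (by positivity)]
    nlinarith
  have hdom : Tendsto (fun n => ∫ p, max (‖D n p‖ * ‖x p‖ - κ * ‖D n p‖ ^ 2) 0) l
      (𝓝 (∫ _ : ℝ × ℝ, (0 : ℝ))) := by
    refine tendsto_integral_filter_of_dominated_convergence
      (fun p => ‖x p‖ ^ 2 / (4 * κ)) ?_ ?_ ((schwartz_sq_integrable x).div_const _) ?_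
    · refine Eventually.of_forall fun n => Continuous.aestronglyMeasurable ?_
      have := (D n).continuous
      have := x.continuous
      fun_prop
    · refine Eventually.of_forall fun n => ae_of_all _ fun p => ?_
      rw [Real.norm_of_nonneg (le_max_right _ _)]
      refine max_le ?_ (by positivity)
      rw [le_div_iff₀ (by positivity)]
      nlinarith [sq_nonneg (‖x p‖ - 2 * κ * ‖D n p‖)]
    · refine ae_of_all _ fun p => ?_
      have h1 := (hp p).norm
      have h2 : Tendsto (fun n => max (‖D n p‖ * ‖x p‖ - κ * ‖D n p‖ ^ 2) 0) l
          (𝓝 (max (‖(0 : ℂ)‖ * ‖x p‖ - κ * ‖(0 : ℂ)‖ ^ 2) 0)) :=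
        ((h1.mul_const _).sub ((h1.pow 2).const_mul _)).max tendsto_const_nhds
      simpa using h2
  rw [integral_zero] at hdom
  have hev := (tendsto_order.1 hdom).2 (ε / 2) (by positivity)
  filter_upwards [hM, hev] with n hn1 hn2
  rw [dist_zero_right, toL2_inner]
  have hint1 := schwartz_mul_integrable (D n) x
  have hint2 : Integrable (fun p => max (‖D n p‖ * ‖x p‖ - κ * ‖D n p‖ ^ 2) 0) :=
    (hint1.sub ((schwartz_sq_integrable (D n)).const_mul κ)).sup (integrable_zero _ _ _)
  calc ‖∫ p, inner ℂ (D n p) (x p)‖ ≤ ∫ p, ‖D n p‖ * ‖x p‖ := by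
        refine norm_integral_le_of_norm_le hint1 (ae_of_all _ fun p => norm_inner_le_norm _ _)
    _ ≤ ∫ p, (κ * ‖D n p‖ ^ 2 + max (‖D n p‖ * ‖x p‖ - κ * ‖D n p‖ ^ 2) 0) := by
        refine integral_mono hint1 (((schwartz_sq_integrable (D n)).const_mul κ).add hint2) ?_
        intro p
        simp only
        linarith [le_max_left (‖D n p‖ * ‖x p‖ - κ * ‖D n p‖ ^ 2) 0]
    _ = κ * ‖toL2 (D n)‖ ^ 2 + ∫ p, max (‖D n p‖ * ‖x p‖ - κ * ‖D n p‖ ^ 2) 0 := by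
        rw [integral_add ((schwartz_sq_integrable (D n)).const_mul κ) hint2,
          integral_const_mul, toL2_normsq]
    _ < ε := by
        have : ‖toL2 (D n)‖ ^ 2 ≤ M ^ 2 := by gcongr
        nlinarith

theorem weak_conv {α : Type*} {l : Filter α} [l.IsCountablyGenerated]
    (f : α → SchwartzMap (ℝ × ℝ) ℂ) (g : SchwartzMap (ℝ × ℝ) ℂ) (M : ℝ)
    (hM : ∀ᶠ n in l, ‖toL2 (f n)‖ ≤ M)
    (hp : ∀ p, Tendsto (fun n => f n p) l (𝓝 (g p))) (x : SchwartzMap (ℝ × ℝ) ℂ) :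
    Tendsto (fun n => inner ℂ (toL2 (f n)) (toL2 x)) l (𝓝 (inner ℂ (toL2 g) (toL2 x))) := by
  have h := weak_zero (l := l) (fun n => f n - g) (M + ‖toL2 g‖)
    (hM.mono fun n hn => by
      rw [map_sub]; exact (norm_sub_le _ _).trans (by linarith))
    (fun p => by
      have := (hp p).sub_const (g p)
      simpa using this) x
  have h2 := h.add_const (inner ℂ (toL2 g) (toL2 x))
  simpa [inner_sub_left] using h2

/-- `ψ` is the pointwise time derivative of `φ` on `[0,∞)`. -/
def PtDeriv (φ ψ : ℝ → SchwartzMap (ℝ × ℝ) ℂ) : Prop :=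
  ∀ t, 0 ≤ t → ∀ p, HasDerivWithinAt (fun s => φ s p) (ψ t p) (Ici 0) t

theorem concrete_H2 {φ ψ : ℝ → SchwartzMap (ℝ × ℝ) ℂ} (h : PtDeriv φ ψ)
    (a b t M : ℝ) (ha : 0 ≤ a) (ht : t ∈ Icc a b)
    (hL : ∀ s ∈ Icc a b, ‖toL2 (φ s) - toL2 (φ t)‖ ≤ M * |s - t|) (x : SchwartzMap (ℝ × ℝ) ℂ) :
    HasDerivWithinAt (fun s => (inner ℂ (toL2 (φ s)) (toL2 x)).re)
        (inner ℂ (toL2 (ψ t)) (toL2 x)).re (Icc a b) t := by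
  rw [hasDerivWithinAt_iff_tendsto_slope]
  have hw := weak_conv (l := 𝓝[Icc a b \ {t}] t)
    (fun s => (((s - t)⁻¹ : ℝ) : ℂ) • (φ s - φ t)) (ψ t) M
    (by
      filter_upwards [self_mem_nhdsWithin] with s hs
      have hst : 0 < |s - t| := abs_pos.2 (sub_ne_zero.2 hs.2)
      rw [map_smul, norm_smul, map_sub, Complex.norm_real, norm_inv, Real.norm_eq_abs,
        inv_mul_le_iff₀ hst, mul_comm]
      exact hL s hs.1)
    (fun p => by
      have h1 := (h t (ha.trans ht.1) p).mono (s := Icc a b) (fun r hr => ha.trans hr.1)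
      rw [hasDerivWithinAt_iff_tendsto_slope] at h1
      refine h1.congr fun s => ?_
      simp [slope_def_module]) x
  have h2 := (Complex.continuous_re.tendsto _).comp hw
  refine h2.congr fun s => ?_
  simp only [Function.comp, map_smul, inner_smul_left, map_sub, inner_sub_left, slope_def_field]
  rw [Complex.conj_ofReal, Complex.re_ofReal_mul, Complex.sub_re]
  field_simp

theorem concrete_H3 {φ ψ : ℝ → SchwartzMap (ℝ × ℝ) ℂ} (h : PtDeriv φ ψ)
    (A : SchwartzMap (ℝ × ℝ) ℂ →ₗ[ℂ] SchwartzMap (ℝ × ℝ) ℂ)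
    (hA : ∀ x y, inner ℂ (toL2 (A x)) (toL2 y) = - inner ℂ (toL2 x) (toL2 (A y))) (n : ℕ) :
    IsClosed {t : ℝ | 0 ≤ t ∧ ‖toL2 (φ t)‖ ≤ n ∧ ‖toL2 (A (φ t))‖ ≤ n} := by
  set T := {t : ℝ | 0 ≤ t ∧ ‖toL2 (φ t)‖ ≤ n ∧ ‖toL2 (A (φ t))‖ ≤ n} with hT
  refine isClosed_of_closure_subset fun t ht => ?_
  have ht0 : 0 ≤ t := by
    have : closure T ⊆ Ici 0 := closure_minimal (fun s hs => hs.1) isClosed_Ici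
    exact this ht
  have hne : (𝓝[T] t).NeBot := mem_closure_iff_nhdsWithin_neBot.1 ht
  have hw := weak_conv (l := 𝓝[T] t) φ (φ t) n
    (by filter_upwards [self_mem_nhdsWithin] with s hs using hs.2.1)
    (fun p => ((h t ht0 p).continuousWithinAt.mono (fun s hs => hs.1)).tendsto)
  have key : ∀ y : Lp ℂ 2 (volume : Measure (ℝ × ℝ)), ‖inner ℂ y y‖ ≤ n * ‖y‖ → ‖y‖ ≤ n := by
    intro y hy
    rw [inner_self_eq_norm_sq_to_K] at hy
    simp only [norm_pow, RCLike.norm_ofReal, abs_norm] at hy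
    by_contra hc
    push Not at hc
    have : (0 : ℝ) ≤ n := n.cast_nonneg
    nlinarith
  refine ⟨ht0, key _ ?_, key _ ?_⟩
  · refine le_of_tendsto (hw (φ t)).norm ?_
    filter_upwards [self_mem_nhdsWithin] with s hs
    refine (norm_inner_le_norm _ _).trans ?_
    gcongr
    exact hs.2.1
  · rw [hA]
    refine le_of_tendsto (hw (A (A (φ t)))).neg.norm ?_
    filter_upwards [self_mem_nhdsWithin] with s hs
    rw [← hA]
    refine (norm_inner_le_norm _ _).trans ?_
    gcongr
    exact hs.2.2

set_option maxHeartbeats 800000 in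
theorem concrete_H4 {φ ψ : ℝ → SchwartzMap (ℝ × ℝ) ℂ} (h : PtDeriv φ ψ)
    (a b M : ℝ) (ha : 0 ≤ a) (hab : a ≤ b) (hM : ∀ t ∈ Ioo a b, ‖toL2 (ψ t)‖ ≤ M) :
      ‖toL2 (φ b) - toL2 (φ a)‖ ≤ M * (b - a) := by
  set x := φ b - φ a with hx
  have hcont : ∀ p, ContinuousOn (fun s => φ s p) (Ici 0) := fun p s hs =>
    (h s hs p).continuousWithinAt
  have hmeas1 : ∀ c : ℝ, 0 ≤ c → Measurable (fun q : ℝ × (ℝ × ℝ) => φ (max q.1 0 + c) q.2) := by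
    intro c hc
    refine measurable_uncurry_of_continuous_of_measurable
      (u := fun (τ : ℝ) (p : ℝ × ℝ) => φ (max τ 0 + c) p) ?_ ?_
    · intro p
      refine (hcont p).comp_continuous (by fun_prop) fun s => ?_
      exact add_nonneg (le_max_right _ _) hc
    · intro τ
      exact (φ _).continuous.measurable
  have hmeas : Measurable (fun q : ℝ × (ℝ × ℝ) => ψ (max q.1 0) q.2) := by
    refine measurable_of_tendsto_metrizable
      (f := fun (n : ℕ) (q : ℝ × (ℝ × ℝ)) => ((1 / ((n : ℝ) + 1))⁻¹ : ℝ) •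
        (φ (max q.1 0 + 1 / ((n : ℝ) + 1)) q.2 - φ (max q.1 0 + 0) q.2)) ?_ ?_
    · intro n
      exact ((hmeas1 _ (by positivity)).sub (hmeas1 0 le_rfl)).const_smul ((1 / ((n : ℝ) + 1))⁻¹ : ℝ)
    · rw [tendsto_pi_nhds]
      rintro ⟨τ, p⟩
      have h1 := h (max τ 0) (le_max_right _ _) p
      have h2 := (h1.mono (s := Ioi (max τ 0))
        (fun r hr => (le_max_right τ 0).trans (le_of_lt hr)))
      rw [hasDerivWithinAt_iff_tendsto_slope' (by simp)] at h2
      have h3 : Tendsto (fun n : ℕ => max τ 0 + 1 / ((n : ℝ) + 1)) atTop (𝓝[>] (max τ 0)) := by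
        refine tendsto_nhdsWithin_iff.2 ⟨?_, Eventually.of_forall fun n => ?_⟩
        · have := (tendsto_one_div_add_atTop_nhds_zero_nat (𝕜 := ℝ)).const_add (max τ 0)
          simpa using this
        · simp only [mem_Ioi, lt_add_iff_pos_right]; positivity
      refine (h2.comp h3).congr fun n => ?_
      simp [slope_def_module]
  set μ : Measure ℝ := volume.restrict (Ioc a b) with hμ
  let G : ℝ × (ℝ × ℝ) → ℂ := fun q => inner ℂ (ψ (max q.1 0) q.2) (x q.2)
  have hGm : AEStronglyMeasurable G (μ.prod volume) := by
    refine Measurable.aestronglyMeasurable ?_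
    exact hmeas.inner (x.continuous.measurable.comp measurable_snd)
  have haeIoo : ∀ᵐ τ ∂μ, τ ∈ Ioo a b := by
    rw [hμ, ← restrict_Ioo_eq_restrict_Ioc]
    exact ae_restrict_mem measurableSet_Ioo
  have hGi : Integrable G (μ.prod volume) := by
    rw [integrable_prod_iff hGm]
    refine ⟨ae_of_all _ fun τ => schwartz_inner_integrable (ψ (max τ 0)) x, ?_⟩
    refine Integrable.mono' (g := fun _ => (M ^ 2 + ‖toL2 x‖ ^ 2)) (integrable_const _)
      hGm.norm.integral_prod_right' ?_
    filter_upwards [haeIoo] with τ hτ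
    rw [Real.norm_of_nonneg (integral_nonneg fun _ => norm_nonneg _)]
    have hτ0 : max τ 0 = τ := max_eq_left (ha.trans hτ.1.le)
    calc ∫ p, ‖G (τ, p)‖ ≤ ∫ p, (‖ψ τ p‖ ^ 2 + ‖x p‖ ^ 2) := by
          refine integral_mono (schwartz_inner_integrable (ψ (max τ 0)) x).norm
            ((schwartz_sq_integrable (ψ τ)).add (schwartz_sq_integrable x)) fun p => ?_
          simp only [G, hτ0]
          refine (norm_inner_le_norm _ _).trans ?_
          nlinarith [sq_nonneg (‖ψ τ p‖ - ‖x p‖), sq_nonneg (‖ψ τ p‖), sq_nonneg (‖x p‖)]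
      _ = ‖toL2 (ψ τ)‖ ^ 2 + ‖toL2 x‖ ^ 2 := by
          rw [integral_add (schwartz_sq_integrable (ψ τ)) (schwartz_sq_integrable x), toL2_normsq,
            toL2_normsq]
      _ ≤ _ := by
          have := hM τ hτ
          gcongr
  have hftc : ∀ᵐ p : ℝ × ℝ, ∫ τ, G (τ, p) ∂μ = inner ℂ (x p) (x p) := by
    filter_upwards [hGi.prod_left_ae] with p hp
    have hI : IntervalIntegrable (fun τ => G (τ, p)) volume a b := by
      rw [intervalIntegrable_iff_integrableOn_Ioc_of_le hab]
      exact hp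
    have := intervalIntegral.integral_eq_sub_of_hasDeriv_right_of_le
      (f := fun τ => inner ℂ (φ τ p) (x p)) (f' := fun τ => G (τ, p)) hab
      (fun s hs => ContinuousWithinAt.inner (𝕜 := ℂ) ((hcont p s (ha.trans hs.1)).mono
        (fun r (hr : r ∈ Icc a b) => ha.trans hr.1)) continuousWithinAt_const)
      (fun s hs => by
        have hs0 : 0 ≤ s := ha.trans hs.1.le
        have h1 := (h s hs0 p).mono (s := Ioi s) (fun r hr => hs0.trans (le_of_lt hr))
        have h2 := HasDerivWithinAt.inner ℂ h1 (hasDerivWithinAt_const s (Ioi s) (x p))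
        simpa [G, max_eq_left hs0] using h2) hI
    rw [intervalIntegral.integral_of_le hab] at this
    rw [hμ, this, ← inner_sub_left, hx]
    simp
  have hswap : inner ℂ (toL2 x) (toL2 x) = ∫ τ, inner ℂ (toL2 (ψ (max τ 0))) (toL2 x) ∂μ := by
    rw [toL2_inner, ← integral_congr_ae hftc, ← integral_prod_symm _ hGi, integral_prod _ hGi]
    simp_rw [toL2_inner]
    rfl
  have hbound : ‖inner ℂ (toL2 x) (toL2 x)‖ ≤ (M * ‖toL2 x‖) * (b - a) := by
    rw [hswap]
    have := norm_integral_le_of_norm_le_const (μ := μ) (C := M * ‖toL2 x‖)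
      (f := fun τ => inner ℂ (toL2 (ψ (max τ 0))) (toL2 x)) (by
        filter_upwards [haeIoo] with τ hτ
        rw [max_eq_left (ha.trans hτ.1.le)]
        refine (norm_inner_le_norm _ _).trans ?_
        gcongr
        exact hM τ hτ)
    rw [hμ, measureReal_restrict_apply_univ, Real.volume_real_Ioc_of_le hab] at this
    exact this
  rw [inner_self_eq_norm_sq_to_K] at hbound
  simp only [norm_pow, RCLike.norm_ofReal, abs_norm] at hbound
  rw [← map_sub, ← hx]
  by_contra hc
  push Not at hc
  rcases hab.eq_or_lt with h0 | h0
  · subst h0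
    simp [hx] at hc
  · have hM0 : 0 ≤ M := (norm_nonneg _).trans (hM ((a + b) / 2) ⟨by linarith, by linarith⟩)
    have : 0 ≤ M * (b - a) := mul_nonneg hM0 (by linarith)
    nlinarith

end ConcretePart


section OpsPart
open Set Filter Topology
open scoped LineDeriv

noncomputable def X1 : Module.End ℂ (SchwartzMap (ℝ × ℝ) ℂ) :=
  (SchwartzMap.smulLeftCLM ℂ (fun p : ℝ × ℝ => (p.1 : ℂ))).toLinearMap
noncomputable def X2 : Module.End ℂ (SchwartzMap (ℝ × ℝ) ℂ) :=
  (SchwartzMap.smulLeftCLM ℂ (fun p : ℝ × ℝ => (p.2 : ℂ))).toLinearMap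
noncomputable def D1 : Module.End ℂ (SchwartzMap (ℝ × ℝ) ℂ) :=
  (LineDeriv.lineDerivOpCLM ℂ (SchwartzMap (ℝ × ℝ) ℂ) ((1, 0) : ℝ × ℝ)).toLinearMap
noncomputable def D2 : Module.End ℂ (SchwartzMap (ℝ × ℝ) ℂ) :=
  (LineDeriv.lineDerivOpCLM ℂ (SchwartzMap (ℝ × ℝ) ℂ) ((0, 1) : ℝ × ℝ)).toLinearMap

theorem X1_apply (f : SchwartzMap (ℝ × ℝ) ℂ) (p : ℝ × ℝ) : X1 f p = (p.1 : ℂ) * f p := by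
  have h : Function.HasTemperateGrowth (fun p : ℝ × ℝ => (p.1 : ℂ)) :=
    (Complex.ofRealCLM.comp (ContinuousLinearMap.fst ℝ ℝ ℝ)).hasTemperateGrowth
  exact SchwartzMap.smulLeftCLM_apply_apply h f p

theorem X2_apply (f : SchwartzMap (ℝ × ℝ) ℂ) (p : ℝ × ℝ) : X2 f p = (p.2 : ℂ) * f p := by
  have h : Function.HasTemperateGrowth (fun p : ℝ × ℝ => (p.2 : ℂ)) :=
    (Complex.ofRealCLM.comp (ContinuousLinearMap.snd ℝ ℝ ℝ)).hasTemperateGrowth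
  exact SchwartzMap.smulLeftCLM_apply_apply h f p

theorem D1_apply (f : SchwartzMap (ℝ × ℝ) ℂ) (p : ℝ × ℝ) : D1 f p = fderiv ℝ f p (1, 0) :=
  SchwartzMap.lineDerivOp_apply_eq_fderiv _ f p

theorem D2_apply (f : SchwartzMap (ℝ × ℝ) ℂ) (p : ℝ × ℝ) : D2 f p = fderiv ℝ f p (0, 1) :=
  SchwartzMap.lineDerivOp_apply_eq_fderiv _ f p

theorem fderiv_eq_D (f : SchwartzMap (ℝ × ℝ) ℂ) (p : ℝ × ℝ) (a b : ℝ) :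
    fderiv ℝ f p (a, b) = a * D1 f p + b * D2 f p := by
  rw [D1_apply, D2_apply]
  have : ((a, b) : ℝ × ℝ) = a • ((1, 0) : ℝ × ℝ) + b • ((0, 1) : ℝ × ℝ) := by simp
  rw [this, map_add, map_smul, map_smul]
  simp

theorem hasDerivAt_curve (f : SchwartzMap (ℝ × ℝ) ℂ) {u v : ℝ → ℝ} {u' v' t : ℝ}
    (hu : HasDerivAt u u' t) (hv : HasDerivAt v v' t) :
    HasDerivAt (fun s => f (u s, v s)) (u' * D1 f (u t, v t) + v' * D2 f (u t, v t)) t := by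
  rw [← fderiv_eq_D]
  exact (f.differentiableAt.hasFDerivAt (x := (u t, v t))).comp_hasDerivAt t (hu.prodMk hv)

theorem deriv_snd (f : SchwartzMap (ℝ × ℝ) ℂ) (a b : ℝ) :
    deriv (fun η => f (a, η)) b = D2 f (a, b) := by
  have := (hasDerivAt_curve f (hasDerivAt_const b a) (hasDerivAt_id b)).deriv
  simpa using this

theorem deriv_fst (f : SchwartzMap (ℝ × ℝ) ℂ) (a b : ℝ) :
    deriv (fun ξ => f (ξ, b)) a = D1 f (a, b) := by
  have := (hasDerivAt_curve f (hasDerivAt_id a) (hasDerivAt_const a b)).deriv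
  simpa using this

theorem iteratedDeriv_snd (n : ℕ) : ∀ (f : SchwartzMap (ℝ × ℝ) ℂ) (a b : ℝ),
    iteratedDeriv n (fun η => f (a, η)) b = (D2 ^ n) f (a, b) := by
  induction n with
  | zero => intro f a b; simp
  | succ n ih =>
    intro f a b
    rw [iteratedDeriv_succ']
    have : deriv (fun η => f (a, η)) = fun η => (D2 f) (a, η) := funext fun η => deriv_snd f a η
    rw [this, ih, pow_succ]
    rfl

theorem X1_pow_apply (n : ℕ) (f : SchwartzMap (ℝ × ℝ) ℂ) (p : ℝ × ℝ) :
    (X1 ^ n) f p = (p.1 : ℂ) ^ n * f p := by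
  induction n with
  | zero => simp
  | succ n ih =>
    rw [pow_succ', Module.End.mul_apply, X1_apply, ih]; ring

noncomputable def LS : Module.End ℂ (SchwartzMap (ℝ × ℝ) ℂ) := X2 * D1 - X1 * D2

theorem LS_apply (f : SchwartzMap (ℝ × ℝ) ℂ) (p : ℝ × ℝ) :
    LS f p = (p.2 : ℂ) * D1 f p - (p.1 : ℂ) * D2 f p := by
  simp only [LS, LinearMap.sub_apply, Module.End.mul_apply, _root_.sub_apply, X1_apply,
    X2_apply]

theorem Lh_eq (f : SchwartzMap (ℝ × ℝ) ℂ) (p : ℝ × ℝ) : Lh f p = LS f p := by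
  rw [LS_apply, Lh, deriv_snd, deriv_fst]

noncomputable def bcoef (V : ℝ → ℝ) (ν j : ℕ) : ℝ :=
  -(iteratedDeriv (ν + 2) V 0) * ((-1 / 4) ^ j *
    (1 / (((2 * j + 1).factorial * (ν + 1 - 2 * j).factorial : ℕ) : ℝ)))

noncomputable def BS (V : ℝ → ℝ) (ν : ℕ) : Module.End ℂ (SchwartzMap (ℝ × ℝ) ℂ) :=
  ∑ j ∈ Finset.range ((ν - 1) / 2 + 2),
    (bcoef V ν j : ℂ) • (X1 ^ (ν + 1 - 2 * j) * D2 ^ (2 * j + 1))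

theorem schwartz_sum_apply {ι : Type*} (s : Finset ι) (f : ι → SchwartzMap (ℝ × ℝ) ℂ)
    (p : ℝ × ℝ) : (∑ i ∈ s, f i) p = ∑ i ∈ s, f i p := by
  classical
  induction s using Finset.induction_on with
  | empty => simp
  | insert a s ha ih => rw [Finset.sum_insert ha, Finset.sum_insert ha, _root_.add_apply, ih]

theorem Bop_eq (V : ℝ → ℝ) (ν : ℕ) (f : SchwartzMap (ℝ × ℝ) ℂ) (p : ℝ × ℝ) :
    Bop V ν f p = BS V ν f p := by
  rw [Bop, BS, LinearMap.sum_apply, schwartz_sum_apply, Finset.mul_sum]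
  refine Finset.sum_congr rfl fun j _ => ?_
  rw [iteratedDeriv_snd, LinearMap.smul_apply, _root_.smul_apply, Module.End.mul_apply,
    X1_pow_apply, bcoef, smul_eq_mul]
  have : (Complex.I / 2) ^ (2 * j) = ((-1 / 4 : ℝ) ^ j : ℂ) := by
    rw [pow_mul, div_pow, Complex.I_sq]; norm_num
  rw [this]
  push_cast
  ring

/-- skew operators on `L²` -/
def Skew (A : Module.End ℂ (SchwartzMap (ℝ × ℝ) ℂ)) : Prop :=
  ∀ x y, inner ℂ (toL2 (A x)) (toL2 y) = - inner ℂ (toL2 x) (toL2 (A y))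

def Symm (A : Module.End ℂ (SchwartzMap (ℝ × ℝ) ℂ)) : Prop :=
  ∀ x y, inner ℂ (toL2 (A x)) (toL2 y) = inner ℂ (toL2 x) (toL2 (A y))

theorem symm_X1 : Symm X1 := fun x y => by
  rw [toL2_inner, toL2_inner]
  congr 1; ext p
  rw [X1_apply, X1_apply, ← smul_eq_mul, ← smul_eq_mul, inner_smul_left, inner_smul_right,
    Complex.conj_ofReal]

theorem symm_X2 : Symm X2 := fun x y => by
  rw [toL2_inner, toL2_inner]
  congr 1; ext p
  rw [X2_apply, X2_apply, ← smul_eq_mul, ← smul_eq_mul, inner_smul_left, inner_smul_right,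
    Complex.conj_ofReal]

theorem ibp (v : ℝ × ℝ) (x y : SchwartzMap (ℝ × ℝ) ℂ) :
    ∫ p, inner ℂ ((∂_{v} x) p) (y p) = - ∫ p, inner ℂ (x p) ((∂_{v} y) p) := by
  have := SchwartzMap.integral_bilinear_lineDerivOp_right_eq_neg_left (μ := volume) x y
    ((ContinuousLinearMap.mul ℝ ℂ).comp (Complex.conjCLE : ℂ →L[ℝ] ℂ)) v
  simp only [ContinuousLinearMap.comp_apply, ContinuousLinearMap.mul_apply'] at this
  rw [eq_neg_iff_add_eq_zero] at this ⊢
  rw [add_comm] at this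
  simp only [RCLike.inner_apply']
  exact this

theorem skew_D1 : Skew D1 := fun x y => by
  rw [toL2_inner, toL2_inner]
  exact ibp _ x y

theorem skew_D2 : Skew D2 := fun x y => by
  rw [toL2_inner, toL2_inner]
  exact ibp _ x y

theorem Skew.mul_symm {A B : Module.End ℂ (SchwartzMap (ℝ × ℝ) ℂ)} (hA : Symm A) (hB : Skew B)
    (hc : A * B = B * A) : Skew (A * B) := fun x y => by
  rw [Module.End.mul_apply, hA, hB, hc, Module.End.mul_apply]

theorem Symm.pow {A : Module.End ℂ (SchwartzMap (ℝ × ℝ) ℂ)} (hA : Symm A) (n : ℕ) :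
    Symm (A ^ n) := by
  induction n with
  | zero => intro x y; simp
  | succ n ih =>
    intro x y
    rw [pow_succ, Module.End.mul_apply, ih, hA, ← Module.End.mul_apply, ← pow_succ', ← pow_succ]

theorem Skew.sq {A : Module.End ℂ (SchwartzMap (ℝ × ℝ) ℂ)} (hA : Skew A) : Symm (A ^ 2) :=
  fun x y => by
    rw [pow_two, Module.End.mul_apply, hA, hA, neg_neg]; rfl

theorem Skew.odd_pow {A : Module.End ℂ (SchwartzMap (ℝ × ℝ) ℂ)} (hA : Skew A) (j : ℕ) :
    Skew (A ^ (2 * j + 1)) := by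
  rw [pow_succ, pow_mul]
  refine Skew.mul_symm (hA.sq.pow j) hA ?_
  rw [← pow_mul, ← pow_succ, ← pow_succ']

theorem Skew.add {A B : Module.End ℂ (SchwartzMap (ℝ × ℝ) ℂ)} (hA : Skew A) (hB : Skew B) :
    Skew (A + B) := fun x y => by
  simp only [LinearMap.add_apply, map_add, inner_add_left, inner_add_right, hA x y, hB x y]
  ring

theorem Skew.smul {A : Module.End ℂ (SchwartzMap (ℝ × ℝ) ℂ)} (hA : Skew A) (c : ℝ) :
    Skew ((c : ℂ) • A) := fun x y => by
  simp only [LinearMap.smul_apply, map_smul, inner_smul_left, inner_smul_right, hA x y,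
    Complex.conj_ofReal]
  ring

theorem Skew.zero : Skew 0 := fun x y => by simp

theorem Skew.sum {ι : Type*} (s : Finset ι) (A : ι → Module.End ℂ (SchwartzMap (ℝ × ℝ) ℂ))
    (hA : ∀ i ∈ s, Skew (A i)) : Skew (∑ i ∈ s, A i) := by
  classical
  induction s using Finset.induction_on with
  | empty => exact Skew.zero
  | insert a s ha ih =>
    rw [Finset.sum_insert ha]
    exact (hA a (by simp)).add (ih fun i hi => hA i (by simp [hi]))

theorem comm_X1_D2 : X1 * D2 = D2 * X1 := by
  ext f p
  obtain ⟨a, b⟩ := p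
  rw [Module.End.mul_apply, Module.End.mul_apply, X1_apply, ← deriv_snd, ← deriv_snd]
  have : (fun η => (X1 f) (a, η)) = fun η => (a : ℂ) * f (a, η) := by
    ext η; rw [X1_apply]
  rw [this, deriv_const_mul_field]

theorem comm_X2_D1 : X2 * D1 = D1 * X2 := by
  ext f p
  obtain ⟨a, b⟩ := p
  rw [Module.End.mul_apply, Module.End.mul_apply, X2_apply, ← deriv_fst, ← deriv_fst]
  have : (fun ξ => (X2 f) (ξ, b)) = fun ξ => (b : ℂ) * f (ξ, b) := by
    ext η; rw [X2_apply]
  rw [this, deriv_const_mul_field]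

theorem skew_BS (V : ℝ → ℝ) (ν : ℕ) : Skew (BS V ν) := by
  refine Skew.sum _ _ fun j _ => Skew.smul (Skew.mul_symm (symm_X1.pow _) (skew_D2.odd_pow _) ?_) _
  exact ((show Commute X1 D2 from comm_X1_D2).pow_pow _ _)

theorem skew_LS : Skew LS := by
  have h := (Skew.mul_symm symm_X2 skew_D1 comm_X2_D1).add
    ((Skew.mul_symm symm_X1 skew_D2 comm_X1_D2).smul (-1))
  have : LS = X2 * D1 + ((-1 : ℝ) : ℂ) • (X1 * D2) := by
    rw [LS]; push_cast; rw [neg_smul, one_smul, sub_eq_add_neg]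
  rw [this]; exact h

noncomputable def AS (V : ℝ → ℝ) (n : ℕ) (ε : ℝ) : Module.End ℂ (SchwartzMap (ℝ × ℝ) ℂ) :=
  ((-1 : ℝ) : ℂ) • (LS + ∑ ν ∈ Finset.Icc 1 n, ((ε ^ ((ν : ℝ) / 2) : ℝ) : ℂ) • BS V ν)

theorem skew_AS (V : ℝ → ℝ) (n : ℕ) (ε : ℝ) : Skew (AS V n ε) :=
  (skew_LS.add (Skew.sum _ _ fun _ _ => (skew_BS V _).smul _)).smul _

theorem AS_apply (V : ℝ → ℝ) (n : ℕ) (ε : ℝ) (f : SchwartzMap (ℝ × ℝ) ℂ) :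
    AS V n ε f = -(LS f + ∑ ν ∈ Finset.Icc 1 n, ((ε ^ ((ν : ℝ) / 2) : ℝ) : ℂ) • BS V ν f) := by
  simp [AS, LinearMap.sum_apply, add_comm]

theorem AS_apply_apply (V : ℝ → ℝ) (n : ℕ) (ε : ℝ) (f : SchwartzMap (ℝ × ℝ) ℂ) (p : ℝ × ℝ) :
    AS V n ε f p = -(Lh f p + ∑ ν ∈ Finset.Icc 1 n,
      ((ε ^ ((ν : ℝ) / 2) : ℝ) : ℂ) * Bop V ν f p) := by
  rw [AS_apply, _root_.neg_apply, _root_.add_apply, schwartz_sum_apply, Lh_eq]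
  simp only [Bop_eq, _root_.smul_apply, smul_eq_mul]

theorem skew_re {A : Module.End ℂ (SchwartzMap (ℝ × ℝ) ℂ)} (hA : Skew A)
    (x : SchwartzMap (ℝ × ℝ) ℂ) : (inner ℂ (toL2 (A x)) (toL2 x)).re = 0 := by
  have h := congrArg Complex.re (hA x x)
  rw [← inner_conj_symm (toL2 x) (toL2 (A x))] at h
  simp only [Complex.neg_re, Complex.conj_re] at h
  linarith

end OpsPart


section FlowPart
open Set Filter Topology

noncomputable def ghL (t : ℝ) : (ℝ × ℝ) →L[ℝ] (ℝ × ℝ) :=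
  (Real.cos t • ContinuousLinearMap.fst ℝ ℝ ℝ + Real.sin t • ContinuousLinearMap.snd ℝ ℝ ℝ).prod
  (Real.cos t • ContinuousLinearMap.snd ℝ ℝ ℝ - Real.sin t • ContinuousLinearMap.fst ℝ ℝ ℝ)

theorem ghL_apply (t : ℝ) (p : ℝ × ℝ) : ghL t p = gh t p := by
  simp [ghL, gh, mul_comm]

theorem gh_comp (s t : ℝ) (p : ℝ × ℝ) : gh s (gh t p) = gh (s + t) p := by
  simp only [gh, Real.cos_add, Real.sin_add]
  ext <;> simp <;> ring

theorem gh_zero (p : ℝ × ℝ) : gh 0 p = p := by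
  simp [gh]

noncomputable def ghE (t : ℝ) : (ℝ × ℝ) ≃L[ℝ] (ℝ × ℝ) :=
  ContinuousLinearEquiv.equivOfInverse (ghL t) (ghL (-t))
    (fun p => by rw [ghL_apply, ghL_apply, gh_comp, neg_add_cancel, gh_zero])
    (fun p => by rw [ghL_apply, ghL_apply, gh_comp, add_neg_cancel, gh_zero])

theorem ghE_apply (t : ℝ) (p : ℝ × ℝ) : ghE t p = gh t p := ghL_apply t p

noncomputable def US (t : ℝ) : Module.End ℂ (SchwartzMap (ℝ × ℝ) ℂ) :=
  (SchwartzMap.compCLMOfContinuousLinearEquiv ℂ (ghE (-t))).toLinearMap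

theorem US_apply (t : ℝ) (f : SchwartzMap (ℝ × ℝ) ℂ) (p : ℝ × ℝ) : US t f p = f (gh (-t) p) := by
  rw [← ghE_apply]
  exact congrFun (SchwartzMap.compCLMOfContinuousLinearEquiv_apply ℂ (ghE (-t)) f) p

theorem gh_neg (t : ℝ) (p : ℝ × ℝ) : gh (-t) p =
    (p.1 * Real.cos t - p.2 * Real.sin t, p.2 * Real.cos t + p.1 * Real.sin t) := by
  simp [gh, sub_eq_add_neg]

theorem csq (t : ℝ) : (Real.cos t : ℂ) ^ 2 + (Real.sin t : ℂ) ^ 2 = 1 := by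
  exact_mod_cast Real.cos_sq_add_sin_sq t

theorem X1_US (t : ℝ) (f : SchwartzMap (ℝ × ℝ) ℂ) : X1 (US t f) =
    (Real.cos t : ℂ) • US t (X1 f) + (Real.sin t : ℂ) • US t (X2 f) := by
  ext p
  simp only [_root_.add_apply, _root_.smul_apply, smul_eq_mul, X1_apply, X2_apply, US_apply]
  generalize hq : f (gh (-t) p) = q
  simp only [gh_neg]
  have := csq t
  push_cast at this ⊢
  linear_combination (-(p.1 : ℂ) * q) * this

theorem X2_US (t : ℝ) (f : SchwartzMap (ℝ × ℝ) ℂ) : X2 (US t f) =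
    (Real.cos t : ℂ) • US t (X2 f) + (-Real.sin t : ℂ) • US t (X1 f) := by
  ext p
  simp only [_root_.add_apply, _root_.smul_apply, smul_eq_mul, X1_apply, X2_apply, US_apply]
  generalize hq : f (gh (-t) p) = q
  simp only [gh_neg]
  have := csq t
  push_cast at this ⊢
  linear_combination (-(p.2 : ℂ) * q) * this

theorem D1_US (t : ℝ) (f : SchwartzMap (ℝ × ℝ) ℂ) : D1 (US t f) =
    (Real.cos t : ℂ) • US t (D1 f) + (Real.sin t : ℂ) • US t (D2 f) := by
  ext ⟨a, b⟩
  simp only [_root_.add_apply, _root_.smul_apply, smul_eq_mul, US_apply]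
  rw [← deriv_fst]
  simp only [US_apply, gh_neg]
  have h := hasDerivAt_curve f (t := a)
    (((hasDerivAt_id a).mul_const (Real.cos t)).sub_const (b * Real.sin t))
    (((hasDerivAt_id a).mul_const (Real.sin t)).const_add (b * Real.cos t))
  have := h.deriv
  simpa using this

theorem D2_US (t : ℝ) (f : SchwartzMap (ℝ × ℝ) ℂ) : D2 (US t f) =
    (Real.cos t : ℂ) • US t (D2 f) + (-Real.sin t : ℂ) • US t (D1 f) := by
  ext ⟨a, b⟩
  simp only [_root_.add_apply, _root_.smul_apply, smul_eq_mul, US_apply]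
  rw [← deriv_snd]
  simp only [US_apply, gh_neg]
  have h := hasDerivAt_curve f (t := b)
    (((hasDerivAt_id b).mul_const (Real.sin t)).const_sub (a * Real.cos t))
    (((hasDerivAt_id b).mul_const (Real.cos t)).add_const (a * Real.sin t))
  have := h.deriv
  rw [add_comm]
  simpa using this

theorem LS_US (t : ℝ) (f : SchwartzMap (ℝ × ℝ) ℂ) : LS (US t f) = US t (LS f) := by
  ext p
  rw [LS_apply, D1_US, D2_US, US_apply, LS_apply]
  simp only [_root_.add_apply, _root_.smul_apply, smul_eq_mul, US_apply]
  generalize D1 f (gh (-t) p) = q1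
  generalize D2 f (gh (-t) p) = q2
  rw [gh_neg]
  push_cast
  ring

theorem US_hasDerivAt (f : SchwartzMap (ℝ × ℝ) ℂ) (p : ℝ × ℝ) (t : ℝ) :
    HasDerivAt (fun s => US s f p) (-(LS (US t f) p)) t := by
  rw [LS_US]
  simp only [US_apply, LS_apply, gh_neg]
  have h := hasDerivAt_curve f (t := t)
    (((Real.hasDerivAt_cos t).const_mul p.1).sub ((Real.hasDerivAt_sin t).const_mul p.2))
    (((Real.hasDerivAt_cos t).const_mul p.2).add ((Real.hasDerivAt_sin t).const_mul p.1))
  refine h.congr_deriv ?_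
  simp only [Pi.sub_apply, Pi.add_apply]
  push_cast
  ring

theorem US_norm (t : ℝ) (f : SchwartzMap (ℝ × ℝ) ℂ) : ‖toL2 (US t f)‖ = ‖toL2 f‖ := by
  have hdet : LinearMap.det ((ghL (-t) : (ℝ × ℝ) →L[ℝ] (ℝ × ℝ)) : (ℝ × ℝ) →ₗ[ℝ] (ℝ × ℝ)) = 1 := by
    rw [← LinearMap.det_toMatrix (Module.Basis.finTwoProd ℝ), Matrix.det_fin_two]
    simp only [LinearMap.toMatrix_apply, Module.Basis.finTwoProd_zero, Module.Basis.finTwoProd_one,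
      ContinuousLinearMap.coe_coe, ghL_apply, gh_neg, Module.Basis.coe_finTwoProd_repr]
    simp
    nlinarith [Real.cos_sq_add_sin_sq t]
  have hmap := Measure.map_linearMap_addHaar_eq_smul_addHaar (volume : Measure (ℝ × ℝ))
    (f := ((ghL (-t) : (ℝ × ℝ) →L[ℝ] (ℝ × ℝ)) : (ℝ × ℝ) →ₗ[ℝ] (ℝ × ℝ))) (by rw [hdet]; norm_num)
  rw [hdet] at hmap
  simp only [inv_one, abs_one, ENNReal.ofReal_one, one_smul] at hmap
  have hmp : MeasurePreserving (ghE (-t)).toHomeomorph volume volume :=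
    ⟨(ghE (-t)).continuous.measurable, hmap⟩
  have h2 := hmp.integral_comp (ghE (-t)).toHomeomorph.measurableEmbedding (fun p => ‖f p‖ ^ 2)
  have h3 : ∫ p, ‖US t f p‖ ^ 2 = ∫ p, ‖f p‖ ^ 2 := by
    rw [← h2]
    congr 1
  rw [toL2_normsq, toL2_normsq] at h3
  exact (sq_eq_sq₀ (norm_nonneg _) (norm_nonneg _)).1 h3

/-- continuous functions of polynomial growth -/
def Gr (h : ℝ → ℂ) : Prop := Continuous h ∧ ∃ (C : ℝ) (m : ℕ), 0 ≤ C ∧ ∀ t, ‖h t‖ ≤ C * (1 + |t|) ^ m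

theorem Gr.mul {g h : ℝ → ℂ} (hg : Gr g) (hh : Gr h) : Gr (fun t => g t * h t) := by
  obtain ⟨hg, C, m, hC, hCm⟩ := hg
  obtain ⟨hh, C', m', hC', hCm'⟩ := hh
  refine ⟨hg.mul hh, C * C', m + m', mul_nonneg hC hC', fun t => ?_⟩
  rw [norm_mul, pow_add]
  calc _ ≤ (C * (1 + |t|) ^ m) * (C' * (1 + |t|) ^ m') := by
        gcongr
        · exact hCm t
        · exact hCm' t
    _ = _ := by ring

theorem Gr.one : Gr (fun _ => 1) := ⟨continuous_const, 1, 0, by norm_num, fun t => by simp⟩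

theorem Gr.cos : Gr (fun t => (Real.cos t : ℂ)) :=
  ⟨by fun_prop, 1, 0, by norm_num, fun t => by
    rw [Complex.norm_real]; simpa using Real.abs_cos_le_one t⟩

theorem Gr.sin : Gr (fun t => (Real.sin t : ℂ)) :=
  ⟨by fun_prop, 1, 0, by norm_num, fun t => by
    rw [Complex.norm_real]; simpa using Real.abs_sin_le_one t⟩

theorem Gr.nsin : Gr (fun t => (-Real.sin t : ℂ)) :=
  ⟨by fun_prop, 1, 0, by norm_num, fun t => by
    rw [norm_neg, Complex.norm_real]; simpa using Real.abs_sin_le_one t⟩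

theorem Gr.int {h : ℝ → ℂ} (hh : Gr h) : Gr (fun t => ∫ s in (0 : ℝ)..t, h s) := by
  obtain ⟨hh, C, m, hC, hCm⟩ := hh
  refine ⟨intervalIntegral.continuous_primitive (fun a b => hh.intervalIntegrable a b) 0,
    C, m + 1, hC, fun t => ?_⟩
  have h1 := intervalIntegral.norm_integral_le_of_norm_le_const (f := h) (a := 0) (b := t)
    (C := C * (1 + |t|) ^ m) (fun s hs => by
      refine (hCm s).trans ?_
      have : |s| ≤ |t| := by
        rcases le_total 0 t with h0 | h0
        · rw [uIoc_of_le h0] at hs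
          rw [abs_of_nonneg h0, abs_of_pos hs.1]; exact hs.2
        · rw [uIoc_of_ge h0] at hs
          rw [abs_of_nonpos h0, abs_of_nonpos hs.2]; linarith [hs.1]
      gcongr)
  refine h1.trans ?_
  rw [sub_zero, pow_succ, ← mul_assoc]
  gcongr
  linarith

noncomputable def GG : Submodule ℂ (ℝ → SchwartzMap (ℝ × ℝ) ℂ) :=
  Submodule.span ℂ {Φ | ∃ h F, Gr h ∧ Φ = fun t => h t • US t F}

theorem GG_gen {h : ℝ → ℂ} (hh : Gr h) (F : SchwartzMap (ℝ × ℝ) ℂ) :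
    (fun t => h t • US t F) ∈ GG := Submodule.subset_span ⟨h, F, hh, rfl⟩

/-- operators preserving the class -/
def Pres (T : Module.End ℂ (SchwartzMap (ℝ × ℝ) ℂ)) : Prop :=
  ∀ Φ ∈ GG, (fun t => T (Φ t)) ∈ GG

theorem Pres.of_gen {T : Module.End ℂ (SchwartzMap (ℝ × ℝ) ℂ)}
    (hT : ∀ h F, Gr h → (fun t => T (h t • US t F)) ∈ GG) : Pres T := by
  intro Φ hΦ
  induction hΦ using Submodule.span_induction with
  | mem Φ h => obtain ⟨h, F, hh, rfl⟩ := h; exact hT h F hh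
  | zero => simp only [Pi.zero_apply, map_zero]; exact GG.zero_mem
  | add Φ Ψ _ _ h1 h2 => simp only [Pi.add_apply, map_add]; exact GG.add_mem h1 h2
  | smul c Φ _ h => simp only [Pi.smul_apply, map_smul]; exact GG.smul_mem c h

theorem Pres.of_comm {T T1 T2 : Module.End ℂ (SchwartzMap (ℝ × ℝ) ℂ)} {c1 c2 : ℝ → ℂ}
    (h1 : Gr c1) (h2 : Gr c2) (h : ∀ t f, T (US t f) = c1 t • US t (T1 f) + c2 t • US t (T2 f)) :
    Pres T := by
  refine Pres.of_gen fun g F hg => ?_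
  have := GG.add_mem (GG_gen (hg.mul h1) (T1 F)) (GG_gen (hg.mul h2) (T2 F))
  convert this using 1
  ext1 t
  simp only [map_smul, h, smul_add, smul_smul, Pi.add_apply]

theorem pres_X1 : Pres X1 := Pres.of_comm Gr.cos Gr.sin X1_US
theorem pres_X2 : Pres X2 := Pres.of_comm Gr.cos Gr.nsin X2_US
theorem pres_D1 : Pres D1 := Pres.of_comm Gr.cos Gr.sin D1_US
theorem pres_D2 : Pres D2 := Pres.of_comm Gr.cos Gr.nsin D2_US

theorem Pres.mul {T T' : Module.End ℂ (SchwartzMap (ℝ × ℝ) ℂ)} (h : Pres T) (h' : Pres T') :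
    Pres (T * T') := fun Φ hΦ => h _ (h' Φ hΦ)

theorem Pres.pow {T : Module.End ℂ (SchwartzMap (ℝ × ℝ) ℂ)} (h : Pres T) (n : ℕ) :
    Pres (T ^ n) := by
  induction n with
  | zero => intro Φ hΦ; simpa using hΦ
  | succ n ih => rw [pow_succ]; exact ih.mul h

theorem GG_sum {ι : Type*} (s : Finset ι) (Φ : ι → ℝ → SchwartzMap (ℝ × ℝ) ℂ)
    (h : ∀ i ∈ s, Φ i ∈ GG) : (fun t => ∑ i ∈ s, Φ i t) ∈ GG := by
  have := GG.sum_mem h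
  convert this using 1
  ext1 t; simp

theorem pres_LS : Pres LS := fun Φ hΦ =>
  GG.sub_mem ((pres_X2.mul pres_D1) Φ hΦ) ((pres_X1.mul pres_D2) Φ hΦ)

theorem pres_BS (V : ℝ → ℝ) (ν : ℕ) : Pres (BS V ν) := fun Φ hΦ => by
  simp only [BS, LinearMap.sum_apply, LinearMap.smul_apply]
  exact GG_sum _ _ fun j _ => GG.smul_mem _ (((pres_X1.pow _).mul (pres_D2.pow _)) Φ hΦ)

theorem GG_bound {Φ : ℝ → SchwartzMap (ℝ × ℝ) ℂ} (hΦ : Φ ∈ GG) :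
    ∃ (C : ℝ) (m : ℕ), 0 ≤ C ∧ ∀ t, ‖toL2 (Φ t)‖ ≤ C * (1 + |t|) ^ m := by
  induction hΦ using Submodule.span_induction with
  | mem Φ h =>
    obtain ⟨h, F, ⟨hc, C, m, hC, hCm⟩, rfl⟩ := h
    refine ⟨C * ‖toL2 F‖, m, by positivity, fun t => ?_⟩
    rw [map_smul, norm_smul, US_norm, mul_right_comm]
    gcongr
    exact hCm t
  | zero => exact ⟨0, 0, le_rfl, fun t => by simp⟩
  | add Φ Ψ _ _ h1 h2 =>
    obtain ⟨C, m, hC, h1⟩ := h1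
    obtain ⟨C', m', hC', h2⟩ := h2
    refine ⟨C + C', max m m', by positivity, fun t => ?_⟩
    have ht : 1 ≤ 1 + |t| := by linarith [abs_nonneg t]
    rw [Pi.add_apply, map_add, add_mul]
    refine (norm_add_le _ _).trans (add_le_add ((h1 t).trans ?_) ((h2 t).trans ?_))
    · gcongr; exact le_max_left _ _
    · gcongr; exact le_max_right _ _
  | smul c Φ _ h =>
    obtain ⟨C, m, hC, h1⟩ := h
    refine ⟨‖c‖ * C, m, by positivity, fun t => ?_⟩
    rw [Pi.smul_apply, map_smul, norm_smul, mul_assoc]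
    gcongr
    exact h1 t

theorem GG_duhamel {Φ : ℝ → SchwartzMap (ℝ × ℝ) ℂ} (hΦ : Φ ∈ GG) :
    (∀ t p a b, IntervalIntegrable (fun s => Φ s (gh (-(t - s)) p)) volume a b) ∧
    ∃ Ψ ∈ GG, (∀ t p, Ψ t p = ∫ s in (0 : ℝ)..t, Φ s (gh (-(t - s)) p)) ∧
      ∀ t p, HasDerivAt (fun s => Ψ s p) (Φ t p - LS (Ψ t) p) t := by
  induction hΦ using Submodule.span_induction with
  | mem Φ h =>
    obtain ⟨h, F, hh, rfl⟩ := h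
    have hkey : ∀ t p s, (h s • US s F) (gh (-(t - s)) p) = h s * F (gh (-t) p) := by
      intro t p s
      rw [_root_.smul_apply, smul_eq_mul, US_apply, gh_comp]
      congr 3; ring
    refine ⟨fun t p a b => ?_, fun t => (∫ s in (0 : ℝ)..t, h s) • US t F, GG_gen hh.int F, ?_, ?_⟩
    · simp only [hkey]
      exact (hh.1.mul continuous_const).intervalIntegrable _ _
    · intro t p
      simp only [hkey]
      rw [intervalIntegral.integral_mul_const, _root_.smul_apply, smul_eq_mul, US_apply]
    · intro t p
      have h1 : HasDerivAt (fun t => ∫ s in (0 : ℝ)..t, h s) (h t) t :=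
        intervalIntegral.integral_hasDerivAt_right (hh.1.intervalIntegrable _ _)
          (hh.1.stronglyMeasurableAtFilter _ _) hh.1.continuousAt
      have h2 := h1.mul (US_hasDerivAt F p t)
      refine h2.congr_deriv ?_
      rw [map_smul]
      simp only [_root_.smul_apply, smul_eq_mul]
      ring
  | zero =>
    refine ⟨fun t p a b => ?_, 0, GG.zero_mem, ?_, ?_⟩
    · simp
    · intro t p; simp
    · intro t p; simpa using hasDerivAt_const t (0 : ℂ)
  | add Φ Φ' _ _ h1 h2 =>
    obtain ⟨i1, Ψ, hΨ, e1, d1⟩ := h1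
    obtain ⟨i2, Ψ', hΨ', e2, d2⟩ := h2
    refine ⟨fun t p a b => (i1 t p a b).add (i2 t p a b), Ψ + Ψ', GG.add_mem hΨ hΨ', ?_, ?_⟩
    · intro t p
      simp only [Pi.add_apply, _root_.add_apply]
      rw [intervalIntegral.integral_add (i1 t p 0 t) (i2 t p 0 t), e1, e2]
    · intro t p
      refine ((d1 t p).add (d2 t p)).congr_deriv ?_
      simp only [Pi.add_apply, _root_.add_apply, map_add]
      ring
  | smul c Φ _ h1 =>
    obtain ⟨i1, Ψ, hΨ, e1, d1⟩ := h1
    refine ⟨fun t p a b => (i1 t p a b).const_mul c, c • Ψ, GG.smul_mem c hΨ, ?_, ?_⟩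
    · intro t p
      simp only [Pi.smul_apply, _root_.smul_apply, smul_eq_mul]
      rw [intervalIntegral.integral_const_mul, e1]
    · intro t p
      refine ((d1 t p).const_mul c).congr_deriv ?_
      simp only [Pi.smul_apply, _root_.smul_apply, smul_eq_mul, map_smul]
      ring

end FlowPart


section FinalPart
open Set Filter Topology

theorem Z_struct (V : ℝ → ℝ) (n : ℕ) (f0 : SchwartzMap (ℝ × ℝ) ℂ)
    (Z : ℕ → ℝ → ℝ × ℝ → ℂ)
    (hZ0 : ∀ (t : ℝ) (p : ℝ × ℝ), Z 0 t p = f0 (gh (-t) p))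
    (hZrec : ∀ l : ℕ, 1 ≤ l → ∀ (t : ℝ) (p : ℝ × ℝ), Z l t p =
      -∫ s in (0 : ℝ)..t, ∑ ν ∈ Finset.Icc 1 (min l n),
        Bop V ν (Z (l - ν) s) (gh (-(t - s)) p)) :
    ∃ ζ : ℕ → ℝ → SchwartzMap (ℝ × ℝ) ℂ, (∀ l, ζ l ∈ GG) ∧ (∀ l t p, Z l t p = ζ l t p) ∧
      (∀ l t p, HasDerivAt (fun s => ζ l s p)
        ((-(LS (ζ l t) + ∑ ν ∈ Finset.Icc 1 (min l n), BS V ν (ζ (l - ν) t)) :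
          SchwartzMap (ℝ × ℝ) ℂ) p) t) ∧
      ζ 0 0 = f0 ∧ ∀ l, 1 ≤ l → ζ l 0 = 0 := by
  have hex : ∀ l, ∃ ζ ∈ GG, ∀ t p, Z l t p = (ζ t : SchwartzMap (ℝ × ℝ) ℂ) p := by
    intro l
    induction l using Nat.strong_induction_on with
    | _ l ih =>
      rcases Nat.eq_zero_or_pos l with rfl | hl
      · refine ⟨_, GG_gen Gr.one f0, fun t p => ?_⟩
        rw [hZ0, one_smul, US_apply]
      · have ih' : ∀ k, ∃ ζ ∈ GG, k < l → ∀ t p, Z k t p = (ζ t : SchwartzMap (ℝ × ℝ) ℂ) p := by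
          intro k
          by_cases hk : k < l
          · obtain ⟨ζ, h1, h2⟩ := ih k hk
            exact ⟨ζ, h1, fun _ => h2⟩
          · exact ⟨0, GG.zero_mem, fun h => absurd h hk⟩
        choose ζ hζ hζ' using ih'
        have hΦ := GG_sum (Finset.Icc 1 (min l n)) (fun ν t => BS V ν (ζ (l - ν) t))
          (fun ν _ => pres_BS V ν _ (hζ _))
        obtain ⟨-, Ψ, hΨ, e, -⟩ := GG_duhamel hΦ
        refine ⟨-Ψ, GG.neg_mem hΨ, fun t p => ?_⟩
        rw [hZrec l hl, Pi.neg_apply, _root_.neg_apply, e]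
        congr 2
        ext s
        rw [schwartz_sum_apply]
        refine Finset.sum_congr rfl fun ν hν => ?_
        have hν1 := (Finset.mem_Icc.1 hν).1
        have : Z (l - ν) s = ζ (l - ν) s := funext fun q => hζ' _ (by omega) s q
        rw [this, Bop_eq]
  choose ζ hζ hζ' using hex
  have hrec : ∀ l, 1 ≤ l → ∃ Ψ ∈ GG, (∀ t p, (Ψ t : SchwartzMap (ℝ × ℝ) ℂ) p =
      ∫ s in (0 : ℝ)..t, (∑ ν ∈ Finset.Icc 1 (min l n), BS V ν (ζ (l - ν) s)) (gh (-(t - s)) p)) ∧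
      (∀ t p, HasDerivAt (fun s => Ψ s p) ((∑ ν ∈ Finset.Icc 1 (min l n), BS V ν (ζ (l - ν) t)) p
        - LS (Ψ t) p) t) ∧ ζ l = -Ψ := by
    intro l hl
    have hΦ := GG_sum (Finset.Icc 1 (min l n)) (fun ν t => BS V ν (ζ (l - ν) t))
      (fun ν _ => pres_BS V ν _ (hζ _))
    obtain ⟨-, Ψ, hΨ, e, hd⟩ := GG_duhamel hΦ
    refine ⟨Ψ, hΨ, e, hd, ?_⟩
    ext t p
    rw [← hζ', hZrec l hl, Pi.neg_apply, _root_.neg_apply, e]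
    congr 2
    ext s
    rw [schwartz_sum_apply]
    refine Finset.sum_congr rfl fun ν hν => ?_
    have : Z (l - ν) s = ζ (l - ν) s := funext fun q => hζ' _ s q
    rw [this, Bop_eq]
  have hζ0 : ζ 0 = fun t => US t f0 := by
    ext t p
    rw [← hζ', hZ0, US_apply]
  refine ⟨ζ, hζ, hζ', ?_, ?_, ?_⟩
  · intro l t p
    rcases Nat.eq_zero_or_pos l with rfl | hl
    · simp only [hζ0]
      refine (US_hasDerivAt f0 p t).congr_deriv ?_
      simp
    · obtain ⟨Ψ, -, -, hd, h⟩ := hrec l hl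
      have h2 := (hd t p).neg
      have h3 : (fun s => ζ l s p) = -(fun s => Ψ s p) := by
        ext s; rw [h]; rfl
      rw [h3]
      refine h2.congr_deriv ?_
      have h4 : ζ l t = - Ψ t := by rw [h]; rfl
      rw [h4]
      simp only [map_neg, _root_.neg_apply, _root_.add_apply]
      ring
  · rw [hζ0]
    ext p
    simp [US_apply, gh_zero]
  · intro l hl
    obtain ⟨Ψ, -, e, -, h⟩ := hrec l hl
    ext p
    rw [h, Pi.neg_apply, _root_.neg_apply, e]
    simp

theorem GG_sum_bound {ι : Type*} (s : Finset ι) (Φ : ι → ℝ → SchwartzMap (ℝ × ℝ) ℂ)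
    (h : ∀ i, Φ i ∈ GG) : ∃ (C : ℝ) (m : ℕ), 0 ≤ C ∧
      ∀ t, ∑ i ∈ s, ‖toL2 (Φ i t)‖ ≤ C * (1 + |t|) ^ m := by
  classical
  induction s using Finset.induction_on with
  | empty => exact ⟨0, 0, le_rfl, fun t => by simp⟩
  | insert a s ha ih =>
    obtain ⟨C, m, hC, h1⟩ := GG_bound (h a)
    obtain ⟨C', m', hC', h2⟩ := ih
    refine ⟨C + C', max m m', by positivity, fun t => ?_⟩
    have ht : 1 ≤ 1 + |t| := by linarith [abs_nonneg t]
    rw [Finset.sum_insert ha, add_mul]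
    refine add_le_add ((h1 t).trans ?_) ((h2 t).trans ?_)
    · gcongr; exact le_max_left _ _
    · gcongr; exact le_max_right _ _

theorem reindex {M : Type*} [AddCommMonoid M] (N n : ℕ) (f : ℕ → ℕ → M) :
    ∑ l ∈ Finset.range (N + 1), ∑ ν ∈ Finset.Icc 1 (min l n), f (l - ν) ν =
      ∑ q ∈ (Finset.range (N + 1) ×ˢ Finset.Icc 1 n).filter (fun q => q.1 + q.2 ≤ N),
        f q.1 q.2 := by
  rw [Finset.sum_sigma']
  refine Finset.sum_nbij' (fun x => (x.1 - x.2, x.2)) (fun q => ⟨q.1 + q.2, q.2⟩) ?_ ?_ ?_ ?_ ?_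
  · rintro ⟨l, ν⟩ h
    simp only [Finset.mem_sigma, Finset.mem_range, Finset.mem_Icc, le_min_iff] at h
    simp only [Finset.mem_filter, Finset.mem_product, Finset.mem_range, Finset.mem_Icc]
    omega
  · rintro ⟨l, ν⟩ h
    simp only [Finset.mem_filter, Finset.mem_product, Finset.mem_range, Finset.mem_Icc] at h
    simp only [Finset.mem_sigma, Finset.mem_range, Finset.mem_Icc, le_min_iff]
    omega
  · rintro ⟨l, ν⟩ h
    simp only [Finset.mem_sigma, Finset.mem_range, Finset.mem_Icc, le_min_iff] at h
    have : l - ν + ν = l := by omega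
    simp [this]
  · rintro ⟨l, ν⟩ h
    simp
  · rintro ⟨l, ν⟩ h
    rfl

/-- energy estimate for a forced skew evolution -/
theorem energy_estimate (A : Module.End ℂ (SchwartzMap (ℝ × ℝ) ℂ)) (hA : Skew A)
    {R ρ G : ℝ → SchwartzMap (ℝ × ℝ) ℂ} (h : PtDeriv R ρ) (hR0 : R 0 = 0)
    (hρ : ∀ t, ρ t = A (R t) + G t) (T M c : ℝ) (hT : 0 ≤ T) (hc : 0 ≤ c)
    (hM : ∀ t ∈ Icc 0 T, ‖toL2 (ρ t)‖ ≤ M) (hG : ∀ t ∈ Icc 0 T, ‖toL2 (G t)‖ ≤ c) :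
    ‖toL2 (R T)‖ ≤ c * T := by
  have hlip : ∀ s ∈ Icc 0 T, ∀ t ∈ Icc 0 T, ‖toL2 (R s) - toL2 (R t)‖ ≤ M * |s - t| := by
    have hle : ∀ s ∈ Icc 0 T, ∀ t ∈ Icc 0 T, s ≤ t →
        ‖toL2 (R t) - toL2 (R s)‖ ≤ M * (t - s) := fun s hs t ht hst =>
      concrete_H4 h s t M hs.1 hst fun r hr => hM r ⟨hs.1.trans hr.1.le, hr.2.le.trans ht.2⟩
    intro s hs t ht
    rcases le_total s t with hst | hst
    · rw [norm_sub_rev, abs_sub_comm, abs_of_nonneg (sub_nonneg.2 hst)]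
      exact hle s hs t ht hst
    · rw [abs_of_nonneg (sub_nonneg.2 hst)]
      exact hle t ht s hs hst
  have hder : ∀ t ∈ Icc 0 T, HasDerivWithinAt (fun r => ‖toL2 (R r)‖ ^ 2)
      (2 * (inner ℂ (toL2 (ρ t)) (toL2 (R t))).re) (Icc 0 T) t := fun t ht =>
    aux_normsq_deriv (X := fun r => toL2 (R r)) (fun r hr => hlip r hr t ht)
      (concrete_H2 h 0 T t M le_rfl ht (fun r hr => hlip r hr t ht) (R t))
  have hfin := aux_energy (z := fun r => ‖toL2 (R r)‖ ^ 2)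
    (z' := fun t => 2 * (inner ℂ (toL2 (ρ t)) (toL2 (R t))).re) (a := 0) (b := T) (c := c) hc hT
    (fun t _ => sq_nonneg _) hder (fun t ht => by
      rw [Real.sqrt_sq (norm_nonneg _), hρ, map_add, inner_add_left, Complex.add_re, skew_re hA,
        zero_add, abs_mul, abs_two, mul_assoc]
      gcongr
      refine (Complex.abs_re_le_norm _).trans ((norm_inner_le_norm _ _).trans ?_)
      gcongr
      exact hG t ht)
  simp only [Real.sqrt_sq (norm_nonneg _), hR0, map_zero, norm_zero, sub_zero] at hfin
  simpa using hfin

end FinalPart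

theorem rpow_half_mul {ε : ℝ} (hε : 0 < ε) (a b : ℕ) :
    ε ^ ((a : ℝ) / 2) * ε ^ ((b : ℝ) / 2) = ε ^ (((a + b : ℕ) : ℝ) / 2) := by
  rw [← Real.rpow_add hε]; congr 1; push_cast; ring

/-- the algebraic identity for the truncated expansion -/
theorem expansion_identity (V : ℝ → ℝ) (n N : ℕ) {ε : ℝ} (hε : 0 < ε)
    (ζ : ℕ → SchwartzMap (ℝ × ℝ) ℂ) :
    AS V n ε (∑ l ∈ Finset.range (N + 1), ((ε ^ ((l : ℝ) / 2) : ℝ) : ℂ) • ζ l) =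
      (∑ l ∈ Finset.range (N + 1), ((ε ^ ((l : ℝ) / 2) : ℝ) : ℂ) •
        (-(LS (ζ l) + ∑ ν ∈ Finset.Icc 1 (min l n), BS V ν (ζ (l - ν)))))
      - ∑ q ∈ (Finset.range (N + 1) ×ˢ Finset.Icc 1 n).filter (fun q => ¬ (q.1 + q.2 ≤ N)),
        ((ε ^ (((q.1 + q.2 : ℕ) : ℝ) / 2) : ℝ) : ℂ) • BS V q.2 (ζ q.1) := by
  have h1 : ∑ l ∈ Finset.range (N + 1), ((ε ^ ((l : ℝ) / 2) : ℝ) : ℂ) •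
      ∑ ν ∈ Finset.Icc 1 (min l n), BS V ν (ζ (l - ν)) =
      ∑ q ∈ (Finset.range (N + 1) ×ˢ Finset.Icc 1 n).filter (fun q => q.1 + q.2 ≤ N),
        ((ε ^ (((q.1 + q.2 : ℕ) : ℝ) / 2) : ℝ) : ℂ) • BS V q.2 (ζ q.1) := by
    rw [← reindex N n (fun k ν => ((ε ^ (((k + ν : ℕ) : ℝ) / 2) : ℝ) : ℂ) • BS V ν (ζ k))]
    refine Finset.sum_congr rfl fun l _ => ?_
    rw [Finset.smul_sum]
    refine Finset.sum_congr rfl fun ν hν => ?_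
    have : l - ν + ν = l := by
      have := Finset.mem_Icc.1 hν
      omega
    rw [this]
  have h2 : ∑ l ∈ Finset.range (N + 1), ((ε ^ ((l : ℝ) / 2) : ℝ) : ℂ) •
      ∑ ν ∈ Finset.Icc 1 n, ((ε ^ ((ν : ℝ) / 2) : ℝ) : ℂ) • BS V ν (ζ l) =
      ∑ q ∈ (Finset.range (N + 1) ×ˢ Finset.Icc 1 n),
        ((ε ^ (((q.1 + q.2 : ℕ) : ℝ) / 2) : ℝ) : ℂ) • BS V q.2 (ζ q.1) := by
    rw [Finset.sum_product]
    refine Finset.sum_congr rfl fun l _ => ?_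
    rw [Finset.smul_sum]
    refine Finset.sum_congr rfl fun ν _ => ?_
    rw [smul_smul, ← Complex.ofReal_mul, rpow_half_mul hε]
  rw [← Finset.sum_filter_add_sum_filter_not _ (fun q : ℕ × ℕ => q.1 + q.2 ≤ N), ← h1] at h2
  simp only [map_sum, map_smul, AS_apply, smul_neg, smul_add, Finset.sum_neg_distrib,
    Finset.sum_add_distrib]
  rw [h2]
  abel

/-- Remainder estimate for the harmonic expansion of the solution of the dilated Wigner equation
`∂_t W̃^ε + (L_h + Σ_{ν=1}^{d-2} ε^{ν/2} B_ν) W̃^ε = 0` with ε-independent Schwartz initial data: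
for every `N` there is `C_N` with `‖W̃^ε(t) - Σ_{l=0}^N ε^{l/2} Z^{(l)}(t)‖_{L²} ≤ C_N e^t ε^{(N+1)/2}`
for all `t ≥ 0` and `ε ∈ (0,1]`. -/
theorem harmonic_expansion_remainder_L2
    (V : Polynomial ℝ) (d : ℕ) (hd : 3 ≤ d) (hdeg : V.natDegree = d)
    (hV0 : V.eval 0 = 0) (hV1 : (Polynomial.derivative V).eval 0 = 0)
    (hV2 : (Polynomial.derivative (Polynomial.derivative V)).eval 0 = 1)
    (f0 : SchwartzMap (ℝ × ℝ) ℂ)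
    (W : ℝ → ℝ → ℝ × ℝ → ℂ)
    (hW0 : ∀ ε ∈ Set.Ioc (0 : ℝ) 1, ∀ p : ℝ × ℝ, W ε 0 p = f0 p)
    (hWschwartz : ∀ ε ∈ Set.Ioc (0 : ℝ) 1, ∀ t : ℝ, 0 ≤ t →
      ∃ φ : SchwartzMap (ℝ × ℝ) ℂ, ∀ p : ℝ × ℝ, φ p = W ε t p)
    (hWpde : ∀ ε ∈ Set.Ioc (0 : ℝ) 1, ∀ t : ℝ, 0 ≤ t → ∀ p : ℝ × ℝ,
      HasDerivAt (fun s => W ε s p)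
        (-(Lh (W ε t) p + ∑ ν ∈ Finset.Icc 1 (d - 2),
            ((ε ^ ((ν : ℝ) / 2) : ℝ) : ℂ) * Bop (fun x => V.eval x) ν (W ε t) p)) t)
    (Z : ℕ → ℝ → ℝ × ℝ → ℂ)
    (hZ0 : ∀ (t : ℝ) (p : ℝ × ℝ), Z 0 t p = f0 (gh (-t) p))
    (hZrec : ∀ l : ℕ, 1 ≤ l → ∀ (t : ℝ) (p : ℝ × ℝ), Z l t p =
      -∫ s in (0 : ℝ)..t, ∑ ν ∈ Finset.Icc 1 (min l (d - 2)),
        Bop (fun x => V.eval x) ν (Z (l - ν) s) (gh (-(t - s)) p))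
    (N : ℕ) :
    ∃ C : ℝ, ∀ ε ∈ Set.Ioc (0 : ℝ) 1, ∀ t : ℝ, 0 ≤ t →
      Real.sqrt (∫ p : ℝ × ℝ,
          ‖W ε t p - ∑ l ∈ Finset.range (N + 1), ((ε ^ ((l : ℝ) / 2) : ℝ) : ℂ) * Z l t p‖ ^ 2)
        ≤ C * Real.exp t * ε ^ (((N : ℝ) + 1) / 2) := by
  classical
  obtain ⟨ζ, hζ, hZζ, hζd, hζ0, hζl⟩ := Z_struct (fun x => V.eval x) (d - 2) f0 Z hZ0 hZrec
  set n := d - 2 with hn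
  set P := Finset.range (N + 1) ×ˢ Finset.Icc 1 n with hP
  obtain ⟨C, m, hC, hbd⟩ := GG_sum_bound P
    (fun q t => BS (fun x => V.eval x) q.2 (ζ q.1 t)) (fun q => pres_BS _ _ _ (hζ _))
  refine ⟨C * ((m + 1).factorial * Real.exp 1), fun ε hε T hT => ?_⟩
  have hε0 : 0 < ε := hε.1
  -- the Schwartz representative of the solution
  have hφex : ∀ t : ℝ, ∃ φ : SchwartzMap (ℝ × ℝ) ℂ, 0 ≤ t → ∀ p, φ p = W ε t p := by
    intro t
    by_cases ht : 0 ≤ t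
    · obtain ⟨φ, h⟩ := hWschwartz ε hε t ht
      exact ⟨φ, fun _ => h⟩
    · exact ⟨0, fun h => absurd h ht⟩
  choose φ hφ using hφex
  set A := AS (fun x => V.eval x) n ε with hA
  have hAs : Skew A := skew_AS _ _ _
  have hPt : PtDeriv φ (fun t => A (φ t)) := by
    intro t ht p
    have h1 := (hWpde ε hε t ht p).hasDerivWithinAt (s := Set.Ici 0)
    have h2 : W ε t = φ t := funext fun q => (hφ t ht q).symm
    rw [h2, ← AS_apply_apply] at h1
    exact h1.congr (fun s hs => hφ s hs p) (hφ t ht p)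
  have hbaire : ∀ t, 0 ≤ t → ‖toL2 (A (φ t))‖ ≤ ‖toL2 (A (φ 0))‖ :=
    aux_baire toL2 A φ (skew_re hAs) (concrete_H2 hPt) (concrete_H3 hPt A hAs) (concrete_H4 hPt)
  have hφ0 : φ 0 = f0 := by
    ext p
    rw [hφ 0 le_rfl, hW0 ε hε]
  set ζ' : ℕ → ℝ → SchwartzMap (ℝ × ℝ) ℂ := fun l t =>
    -(LS (ζ l t) + ∑ ν ∈ Finset.Icc 1 (min l n), BS (fun x => V.eval x) ν (ζ (l - ν) t)) with hζ'
  have hζ'G : ∀ l, ζ' l ∈ GG := fun l => GG.neg_mem (GG.add_mem (pres_LS _ (hζ l))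
    (GG_sum _ _ fun ν _ => pres_BS _ _ _ (hζ _)))
  set S' : ℝ → SchwartzMap (ℝ × ℝ) ℂ := fun t =>
    ∑ l ∈ Finset.range (N + 1), ((ε ^ ((l : ℝ) / 2) : ℝ) : ℂ) • ζ' l t with hS'
  have hS'G : S' ∈ GG := GG_sum _ _ fun l _ => GG.smul_mem _ (hζ'G l)
  obtain ⟨C2, m2, hC2, hbd2⟩ := GG_bound hS'G
  set R : ℝ → SchwartzMap (ℝ × ℝ) ℂ := fun t =>
    φ t - ∑ l ∈ Finset.range (N + 1), ((ε ^ ((l : ℝ) / 2) : ℝ) : ℂ) • ζ l t with hR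
  set G : ℝ → SchwartzMap (ℝ × ℝ) ℂ := fun t =>
    - ∑ q ∈ P.filter (fun q => ¬ (q.1 + q.2 ≤ N)),
        ((ε ^ (((q.1 + q.2 : ℕ) : ℝ) / 2) : ℝ) : ℂ) • BS (fun x => V.eval x) q.2 (ζ q.1 t) with hG
  have hRP : PtDeriv R (fun t => A (φ t) - S' t) := by
    intro t ht p
    have h1 := hPt t ht p
    have h2 : HasDerivAt (fun s => ∑ l ∈ Finset.range (N + 1),
        ((ε ^ ((l : ℝ) / 2) : ℝ) : ℂ) * ζ l s p)
        (∑ l ∈ Finset.range (N + 1), ((ε ^ ((l : ℝ) / 2) : ℝ) : ℂ) * ζ' l t p) t :=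
      HasDerivAt.fun_sum fun l _ => (hζd l t p).const_mul _
    have h3 := h1.sub h2.hasDerivWithinAt
    refine (h3.congr_deriv ?_).congr (fun s _ => ?_) ?_
    · rw [_root_.sub_apply, hS', schwartz_sum_apply]
      rfl
    · rw [hR, _root_.sub_apply, schwartz_sum_apply]
      rfl
    · rw [hR, _root_.sub_apply, schwartz_sum_apply]
      rfl
  have hR0 : R 0 = 0 := by
    simp only [hR]
    rw [Finset.sum_eq_single 0]
    · simp [hφ0, hζ0]
    · intro l _ hl
      rw [hζl l (Nat.one_le_iff_ne_zero.2 hl), smul_zero]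
    · simp
  have hρ : ∀ t, A (φ t) - S' t = A (R t) + G t := by
    intro t
    have := expansion_identity (fun x => V.eval x) n N hε0 (fun l => ζ l t)
    simp only [hR, map_sub]
    rw [hA, this]
    simp only [hS', hG, hζ', hP]
    abel
  set E := ε ^ (((N : ℝ) + 1) / 2) with hE
  have hE0 : 0 ≤ E := Real.rpow_nonneg hε0.le _
  have hGb : ∀ t ∈ Set.Icc 0 T, ‖toL2 (G t)‖ ≤ E * (C * (1 + T) ^ m) := by
    intro t ht
    simp only [hG, map_neg, norm_neg, map_sum, map_smul]
    calc _ ≤ ∑ q ∈ P.filter (fun q => ¬ (q.1 + q.2 ≤ N)),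
          E * ‖toL2 (BS (fun x => V.eval x) q.2 (ζ q.1 t))‖ := by
          refine norm_sum_le_of_le _ fun q hq => ?_
          rw [norm_smul, Complex.norm_real, Real.norm_of_nonneg (Real.rpow_nonneg hε0.le _)]
          gcongr
          refine Real.rpow_le_rpow_of_exponent_ge hε0 hε.2 ?_
          have h1 := (Finset.mem_filter.1 hq).2
          have h2 : N + 1 ≤ q.1 + q.2 := by omega
          have h3 : (N : ℝ) + 1 ≤ ((q.1 + q.2 : ℕ) : ℝ) := by exact_mod_cast h2
          linarith
      _ ≤ ∑ q ∈ P, E * ‖toL2 (BS (fun x => V.eval x) q.2 (ζ q.1 t))‖ :=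
          Finset.sum_le_sum_of_subset_of_nonneg (Finset.filter_subset _ _)
            fun _ _ _ => by positivity
      _ = E * ∑ q ∈ P, ‖toL2 (BS (fun x => V.eval x) q.2 (ζ q.1 t))‖ := by rw [Finset.mul_sum]
      _ ≤ E * (C * (1 + |t|) ^ m) := by gcongr; exact hbd t
      _ ≤ _ := by
          have : |t| ≤ T := by rw [abs_of_nonneg ht.1]; exact ht.2
          gcongr
  have hfin := energy_estimate A hAs hRP hR0 hρ T (‖toL2 (A (φ 0))‖ + C2 * (1 + T) ^ m2)
    (E * (C * (1 + T) ^ m)) hT (by positivity) (fun t ht => by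
      rw [map_sub]
      refine (norm_sub_le _ _).trans (add_le_add (hbaire t ht.1) ((hbd2 t).trans ?_))
      have : |t| ≤ T := by rw [abs_of_nonneg ht.1]; exact ht.2
      gcongr) hGb
  have hint : (fun p : ℝ × ℝ => ‖W ε T p - ∑ l ∈ Finset.range (N + 1),
      ((ε ^ ((l : ℝ) / 2) : ℝ) : ℂ) * Z l T p‖ ^ 2) = fun p => ‖R T p‖ ^ 2 := by
    ext p
    rw [hR, _root_.sub_apply, schwartz_sum_apply, hφ T hT]
    simp only [_root_.smul_apply, smul_eq_mul, hZζ]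
  rw [hint, toL2_normsq, Real.sqrt_sq (norm_nonneg _)]
  refine hfin.trans ?_
  have hexp : (1 + T) ^ (m + 1) ≤ (m + 1).factorial * (Real.exp 1 * Real.exp T) := by
    rw [← Real.exp_add]
    have h1 := Real.pow_div_factorial_le_exp (1 + T) (by linarith) (m + 1)
    rw [div_le_iff₀ (by positivity)] at h1
    linarith
  calc E * (C * (1 + T) ^ m) * T ≤ E * (C * (1 + T) ^ m) * (1 + T) := by
        gcongr; linarith
    _ = E * C * (1 + T) ^ (m + 1) := by ring
    _ ≤ E * C * ((m + 1).factorial * (Real.exp 1 * Real.exp T)) := by gcongr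
    _ = _ := by ring
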